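/- arXiv:0911.0354 — 4 statements merged into one kernel-verified Lean document; each statement's English description precedes it below -/
import Mathlib

section
/- Let (W,S) be a Coxeter system with S finite and let (s,w) be a base. Then the support J of (s,w) is irreducible and tree-2-spherical, i.e. every pair of elements of J generates a finite subgroup and the graph on J whose edges are the pairs {j,j'} with the order of jj' at least 3 is a forest. -/
variable {B : Type*} {W : Type*} [Group W] {M : CoxeterMatrix B}

/-- A subset `J` of the index set is *spherical* if the corresponding simple reflections
generate a finite subgroup. -/
def Spherical (cs : CoxeterSystem M W) (J : Set B) : Prop :=
  (Subgroup.closure (cs.simple '' J) : Set W).Finite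

/-- Two indices are *adjacent* if the corresponding simple reflections generate a finite
subgroup. -/
def Adjacent (cs : CoxeterSystem M W) (i j : B) : Prop :=
  (Subgroup.closure {cs.simple i, cs.simple j} : Set W).Finite

/-- A subset is *2-spherical* if every pair of its elements is adjacent. -/
def TwoSpherical (cs : CoxeterSystem M W) (J : Set B) : Prop :=
  ∀ i ∈ J, ∀ j ∈ J, Adjacent cs i j

/-- A subset is *irreducible* if it cannot be partitioned into two nonempty subsets whose
corresponding simple reflections commute elementwise. -/
def IrreducibleSubset (cs : CoxeterSystem M W) (J : Set B) : Prop :=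
  ¬ ∃ K L : Set B, K.Nonempty ∧ L.Nonempty ∧ Disjoint K L ∧ K ∪ L = J ∧
      ∀ k ∈ K, ∀ l ∈ L, Commute (cs.simple k) (cs.simple l)

/-- `perpIn cs T J` is the set `J⊥` of elements of `T ∖ J` whose simple reflections commute
with those of every element of `J`. -/
def perpIn (cs : CoxeterSystem M W) (T J : Set B) : Set B :=
  {i ∈ T \ J | ∀ j ∈ J, Commute (cs.simple i) (cs.simple j)}

/-- A subset `T` of the index set is *connected* if any two of its elements are joined by a
path inside `T` whose edges are adjacent pairs. -/
def ConnectedIn (cs : CoxeterSystem M W) (T : Set B) : Prop :=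
  ∀ a ∈ T, ∀ b ∈ T,
    Relation.ReflTransGen (fun x y => x ∈ T ∧ y ∈ T ∧ Adjacent cs x y) a b

/-- A subset `T` is *twist-rigid* if for every irreducible spherical subset `L ⊆ T` the set
`T ∖ (L ∪ L⊥)` is connected, where `L⊥` is taken inside `T`. -/
def TwistRigidIn (cs : CoxeterSystem M W) (T : Set B) : Prop :=
  ∀ L ⊆ T, IrreducibleSubset cs L → Spherical cs L →
    ConnectedIn cs (T \ (L ∪ perpIn cs T L))

/-- A pair `(s, w)` is a *base* if `ℓ(w⁻¹ s w) = 2 ℓ(w) + 1` and every reflection `t` with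
`ℓ(t w) < ℓ(w)` generates together with `s` a finite subgroup. -/
def IsBase (cs : CoxeterSystem M W) (s : B) (w : W) : Prop :=
  cs.length (w⁻¹ * cs.simple s * w) = 2 * cs.length w + 1 ∧
    ∀ t : W, cs.IsReflection t → cs.length (t * w) < cs.length w →
      (Subgroup.closure {cs.simple s, t} : Set W).Finite

/-- `J` is the *support* of `(s, w)` if it is the smallest subset of the index set containing
`s` with `w ∈ W_J`. -/
def IsSupport (cs : CoxeterSystem M W) (s : B) (w : W) (J : Set B) : Prop :=
  s ∈ J ∧ w ∈ Subgroup.closure (cs.simple '' J) ∧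
    ∀ J' : Set B, s ∈ J' → w ∈ Subgroup.closure (cs.simple '' J') → J ⊆ J'

/-- A base `(s, w)` is *simple* if `w` is represented by a reduced word whose letters are
pairwise distinct and distinct from `s`. -/
def IsSimpleBase (cs : CoxeterSystem M W) (s : B) (w : W) : Prop :=
  IsBase cs s w ∧ ∃ l : List B, w = cs.wordProd l ∧ cs.length w = l.length ∧
    l.Nodup ∧ s ∉ l

/-- The *shadow* of a base `(s, w)` with support `J`: the set of `j ∈ J` with
`ℓ((wj)⁻¹ s (wj)) ≤ ℓ(w⁻¹ s w)`. -/
def shadow (cs : CoxeterSystem M W) (s : B) (w : W) (J : Set B) : Set B :=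
  {j ∈ J | cs.length ((w * cs.simple j)⁻¹ * cs.simple s * (w * cs.simple j)) ≤
    cs.length (w⁻¹ * cs.simple s * w)}

section geometric

set_option linter.unusedSectionVars false
set_option linter.unusedSimpArgs false

open Polynomial.Chebyshev

/-- Entries of the Tits form. -/
noncomputable def titsEntry (M : CoxeterMatrix B) (i j : B) : ℝ :=
  if M i j = 0 then -1 else -Real.cos (Real.pi / M i j)

theorem titsEntry_symm (i j : B) : titsEntry M i j = titsEntry M j i := by
  unfold titsEntry; rw [M.symmetric i j]

theorem titsEntry_self (i : B) : titsEntry M i i = 1 := by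
  simp [titsEntry]

theorem titsEntry_of_two {i j : B} (h : M i j = 2) : titsEntry M i j = 0 := by
  simp [titsEntry, h]

theorem titsEntry_le_neg_half {i j : B} (hij : i ≠ j) (h : M i j ≠ 2) :
    titsEntry M i j ≤ -(1 / 2) := by
  unfold titsEntry
  split_ifs with h0
  · norm_num
  · have h1 : M i j ≠ 1 := M.off_diagonal i j hij
    have h3 : 3 ≤ M i j := by omega
    have h3' : (3 : ℝ) ≤ M i j := by exact_mod_cast h3
    have hpi := Real.pi_pos
    have : Real.cos (Real.pi / 3) ≤ Real.cos (Real.pi / M i j) := by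
      apply Real.cos_le_cos_of_nonneg_of_le_pi
      · positivity
      · linarith
      · exact div_le_div_of_nonneg_left hpi.le (by norm_num) h3'
    rw [Real.cos_pi_div_three] at this
    linarith

theorem titsEntry_nonpos {i j : B} (hij : i ≠ j) : titsEntry M i j ≤ 0 := by
  by_cases h : M i j = 2
  · rw [titsEntry_of_two h]
  · linarith [titsEntry_le_neg_half hij h]

variable [Fintype B] [DecidableEq B]

/-- The Tits form. -/
noncomputable def titsForm (M : CoxeterMatrix B) : LinearMap.BilinForm ℝ (B → ℝ) :=
  Matrix.toBilin' (Matrix.of (titsEntry M))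

/-- The simple roots. -/
noncomputable def sroot (i : B) : B → ℝ := Pi.single i 1

theorem sroot_self (i : B) : sroot i i = 1 := by simp [sroot]

theorem sroot_ne {i j : B} (h : j ≠ i) : sroot i j = 0 := by simp [sroot, h]

theorem titsForm_sroot (i j : B) : titsForm M (sroot i) (sroot j) = titsEntry M i j := by
  simp [titsForm, sroot]

theorem titsForm_apply_sroot (x : B → ℝ) (j : B) :
    titsForm M x (sroot j) = ∑ i, x i * titsEntry M i j := by
  simp [titsForm, sroot, Matrix.toBilin'_apply, Pi.single_apply]

theorem titsForm_comm (x y : B → ℝ) : titsForm M x y = titsForm M y x := by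
  simp only [titsForm, Matrix.toBilin'_apply, Matrix.of_apply]
  rw [Finset.sum_comm]
  refine Finset.sum_congr rfl fun i _ => Finset.sum_congr rfl fun j _ => ?_
  rw [titsEntry_symm]; ring

theorem coroot_self (i : B) : (2 • titsForm M (sroot i)) (sroot i) = 2 := by
  simp [titsForm_sroot, titsEntry_self]

/-- The simple reflections in the geometric representation. -/
noncomputable def srefl (M : CoxeterMatrix B) (i : B) : (B → ℝ) ≃ₗ[ℝ] (B → ℝ) :=
  Module.reflection (coroot_self (M := M) i)

theorem srefl_apply (i : B) (x : B → ℝ) :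
    srefl M i x = x - (2 * titsForm M x (sroot i)) • sroot i := by
  rw [srefl, Module.reflection_apply, titsForm_comm x]
  simp

theorem srefl_sq (i : B) : srefl M i * srefl M i = 1 := by
  ext1 x
  exact Module.involutive_reflection (coroot_self (M := M) i) x

theorem srefl_liftable : M.IsLiftable (srefl M) := by
  intro i j
  by_cases hij : i = j
  · subst hij
    simp [srefl_sq]
  by_cases h0 : M i j = 0
  · simp [h0]
  have h1 : M i j ≠ 1 := M.off_diagonal i j hij
  by_cases h2 : M i j = 2
  · have e : titsEntry M i j = 0 := titsEntry_of_two h2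
    have e' : titsEntry M j i = 0 := by rw [titsEntry_symm, e]
    rw [h2]
    ext1 x
    simp only [pow_two, LinearEquiv.mul_apply, srefl_apply, map_sub, map_smul, LinearMap.sub_apply,
      LinearMap.smul_apply, titsForm_sroot, e, e', titsEntry_self, LinearEquiv.coe_one, id]
    module
  have h3 : 3 ≤ M i j := by omega
  set m := M i j with hm
  have h3' : (3 : ℝ) ≤ m := by exact_mod_cast h3
  have hpi := Real.pi_pos
  set φ : ℝ := 2 * (Real.pi / m) with hφ
  have hmφ : m * φ = 2 * Real.pi := by rw [hφ]; field_simp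
  have hsin : Real.sin φ ≠ 0 := by
    apply (Real.sin_pos_of_pos_of_lt_pi _ _).ne'
    · positivity
    · have : m * φ < m * Real.pi := by rw [hmφ]; nlinarith
      exact lt_of_mul_lt_mul_left this (by positivity)
  have hS : ∀ n : ℤ, (S ℝ n).eval (2 * Real.cos φ) * Real.sin φ = Real.sin ((n + 1) * φ) := by
    intro n
    rw [S_eq_U_comp_half_mul_X, ← U_real_cos]
    simp
  ext1 x
  have ht : 2 * Real.cos φ = (2 • titsForm M (sroot i)) (sroot j) *
      (2 • titsForm M (sroot j)) (sroot i) - 2 := by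
    simp only [LinearMap.smul_apply, titsForm_sroot]
    rw [titsEntry_symm j i, titsEntry, ← hm, if_neg h0, hφ, Real.cos_two_mul]
    simp; ring
  have key := Module.reflection_mul_reflection_pow_apply (coroot_self (M := M) i)
    (coroot_self (M := M) j) m x (2 * Real.cos φ) ht
  change ((Module.reflection (coroot_self (M := M) i) *
    Module.reflection (coroot_self (M := M) j)) ^ m) x = x
  rw [key]
  rcases Nat.even_or_odd' m with ⟨k, hk | hk⟩
  · have e1 : ((m : ℤ) - 2) / 2 = k - 1 := by omega
    have e2 : ((m : ℤ) - 1) / 2 = k - 1 := by omega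
    have hz : (S ℝ ((k : ℤ) - 1)).eval (2 * Real.cos φ) = 0 := by
      have := hS (k - 1)
      have e : (((k : ℤ) - 1 : ℤ) + 1 : ℝ) * φ = Real.pi := by
        have : (m : ℝ) = 2 * k := by exact_mod_cast hk
        rw [this] at hmφ
        push_cast
        linarith
      rw [e, Real.sin_pi] at this
      exact (mul_eq_zero.mp this).resolve_right hsin
    rw [e1, e2, hz]
    simp
  · have e1 : ((m : ℤ) - 2) / 2 = k - 1 := by omega
    have e2 : ((m : ℤ) - 1) / 2 = k := by omega
    have e3 : ((m : ℤ) - 3) / 2 = k - 1 := by omega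
    have e4 : (m : ℤ) / 2 = k := by omega
    have hz : (S ℝ (k : ℤ)).eval (2 * Real.cos φ) + (S ℝ ((k : ℤ) - 1)).eval (2 * Real.cos φ)
        = 0 := by
      have a1 := hS (k - 1)
      have a2 := hS k
      have e : (((k : ℤ) : ℝ) + 1) * φ = 2 * Real.pi - (((k : ℤ) - 1 : ℤ) + 1 : ℝ) * φ := by
        have : (m : ℝ) = 2 * k + 1 := by exact_mod_cast hk
        rw [this] at hmφ
        push_cast
        linarith
      rw [e, Real.sin_two_pi_sub] at a2
      have : ((S ℝ (k : ℤ)).eval (2 * Real.cos φ) + (S ℝ ((k : ℤ) - 1)).eval (2 * Real.cos φ))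
        * Real.sin φ = 0 := by rw [add_mul, a1, a2]; ring
      exact (mul_eq_zero.mp this).resolve_right hsin
    rw [e1, e2, e3, e4, hz]
    simp

/-- The geometric representation. -/
noncomputable def geom (cs : CoxeterSystem M W) : W →* ((B → ℝ) ≃ₗ[ℝ] (B → ℝ)) :=
  cs.lift ⟨srefl M, srefl_liftable⟩

theorem geom_simple (cs : CoxeterSystem M W) (i : B) : geom cs (cs.simple i) = srefl M i := by
  simp [geom]

theorem titsForm_srefl (i : B) (x y : B → ℝ) :
    titsForm M (srefl M i x) (srefl M i y) = titsForm M x y := by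
  simp only [srefl_apply, map_sub, map_smul, LinearMap.sub_apply,
      LinearMap.smul_apply, titsForm_sroot, titsEntry_self, smul_eq_mul]
  rw [titsForm_comm (sroot i) y]
  ring

theorem titsForm_geom (cs : CoxeterSystem M W) (w : W) (x y : B → ℝ) :
    titsForm M (geom cs w x) (geom cs w y) = titsForm M x y := by
  induction w using cs.simple_induction_left with
  | one => simp
  | mul_simple_left w i ih =>
    rw [map_mul, geom_simple, LinearEquiv.mul_apply, LinearEquiv.mul_apply, titsForm_srefl, ih]

/-- The coefficients of roots in dihedral groups. -/
noncomputable def dihCoef (m : ℕ) (k : ℕ) : ℝ :=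
  if m = 0 then k else Real.sin (k * (Real.pi / m)) / Real.sin (Real.pi / m)

theorem dihCoef_zero (m : ℕ) : dihCoef m 0 = 0 := by simp [dihCoef]

theorem dihCoef_one {m : ℕ} (h : m ≠ 1) : dihCoef m 1 = 1 := by
  unfold dihCoef
  split_ifs with h0
  · simp
  · have h2 : (2 : ℝ) ≤ m := by exact_mod_cast (show 2 ≤ m by omega)
    have hpi := Real.pi_pos
    rw [Nat.cast_one, one_mul, div_self]
    apply (Real.sin_pos_of_pos_of_lt_pi _ _).ne'
    · positivity
    · rw [div_lt_iff₀ (by linarith)]; nlinarith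

theorem dihCoef_nonneg {m k : ℕ} (h : m = 0 ∨ k ≤ m) : 0 ≤ dihCoef m k := by
  unfold dihCoef
  split_ifs with h0
  · positivity
  · have hk : k ≤ m := h.resolve_left h0
    have hk' : (k : ℝ) ≤ m := by exact_mod_cast hk
    have hm : (1 : ℝ) ≤ m := by exact_mod_cast (show 1 ≤ m by omega)
    have hpi := Real.pi_pos
    apply div_nonneg
    · apply Real.sin_nonneg_of_nonneg_of_le_pi
      · positivity
      · rw [mul_div_assoc', div_le_iff₀ (by linarith)]; nlinarith
    · apply Real.sin_nonneg_of_nonneg_of_le_pi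
      · positivity
      · rw [div_le_iff₀ (by linarith)]; nlinarith

theorem dihCoef_rec (i j : B) (k : ℕ) :
    dihCoef (M i j) (k + 2) = -2 * titsEntry M i j * dihCoef (M i j) (k + 1) - dihCoef (M i j) k := by
  unfold dihCoef titsEntry
  split_ifs with h0
  · push_cast; ring
  · set θ := Real.pi / M i j
    have : Real.sin ((k + 2 : ℕ) * θ) + Real.sin (k * θ) =
        2 * Real.cos θ * Real.sin ((k + 1 : ℕ) * θ) := by
      have e1 : ((k + 2 : ℕ) : ℝ) * θ = (k + 1 : ℕ) * θ + θ := by push_cast; ring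
      have e2 : (k : ℝ) * θ = (k + 1 : ℕ) * θ - θ := by push_cast; ring
      rw [e1, e2, Real.sin_add, Real.sin_sub]; ring
    rw [eq_sub_of_add_eq this]
    ring

theorem geom_alternating (cs : CoxeterSystem M W) {i j : B} (hij : i ≠ j) (k : ℕ) :
    geom cs (cs.wordProd (CoxeterSystem.alternatingWord i j k)) (sroot i) =
      if Even k then dihCoef (M i j) (k + 1) • sroot i + dihCoef (M i j) k • sroot j
      else dihCoef (M i j) k • sroot i + dihCoef (M i j) (k + 1) • sroot j := by
  induction k with
  | zero =>
    simp [CoxeterSystem.alternatingWord, dihCoef_zero, dihCoef_one (M.off_diagonal i j hij)]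
  | succ k ih =>
    rw [CoxeterSystem.alternatingWord_succ', cs.wordProd_cons, map_mul, LinearEquiv.mul_apply, ih,
      dihCoef_rec i j k]
    by_cases hk : Even k
    · have hk' : ¬ Even (k + 1) := by simpa [Nat.even_add_one] using hk
      rw [if_pos hk, if_pos hk, if_neg hk', geom_simple]
      simp only [srefl_apply, map_add, map_smul, LinearMap.add_apply, LinearMap.smul_apply,
        titsForm_sroot, titsEntry_self, smul_eq_mul]
      module
    · have hk' : Even (k + 1) := by simpa [Nat.even_add_one] using hk
      rw [if_neg hk, if_neg hk, if_pos hk', geom_simple]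
      simp only [srefl_apply, map_add, map_smul, LinearMap.add_apply, LinearMap.smul_apply,
        titsForm_sroot, titsEntry_self, smul_eq_mul, titsEntry_symm j i]
      module

/-- Main theorem on the geometric representation: ascents give nonnegative roots. -/
theorem geom_nonneg (cs : CoxeterSystem M W) (w : W) (i : B)
    (h : cs.length w < cs.length (w * cs.simple i)) : 0 ≤ geom cs w (sroot i) := by
  induction hn : cs.length w using Nat.strong_induction_on generalizing w i with
  | _ n ih =>
  by_cases hw : w = 1
  · subst hw
    simp [sroot]
  obtain ⟨j, hj⟩ := cs.exists_rightDescent_of_ne_one hw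
  have hij : i ≠ j := by
    rintro rfl
    exact absurd hj (by unfold CoxeterSystem.IsRightDescent; omega)
  rw [cs.isRightDescent_iff] at hj
  classical
  let P : ℕ → Prop := fun k => ∃ v : W,
    w = v * cs.wordProd (CoxeterSystem.alternatingWord i j k) ∧ cs.length w = cs.length v + k
  have hP1 : P 1 := ⟨w * cs.simple j, by simp [CoxeterSystem.alternatingWord], hj.symm⟩
  have hbd : ∀ k, P k → k ≤ n := by
    rintro k ⟨v, -, hv⟩; omega
  have hn1 : 1 ≤ n := hbd 1 hP1
  set k := Nat.findGreatest P n with hk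
  have hPk : P k := Nat.findGreatest_spec hn1 hP1
  have hk1 : 1 ≤ k := Nat.le_findGreatest hn1 hP1
  have hmax : ¬ P (k + 1) := fun hp => by
    have := Nat.le_findGreatest (hbd _ hp) hp
    omega
  obtain ⟨v, hv, hl⟩ := hPk
  -- the letter that could be prepended
  have hc : cs.length v < cs.length (v * cs.simple (if Even k then j else i)) := by
    by_contra hcon
    have := (cs.length_mul_simple v (if Even k then j else i)).resolve_left (by omega)
    refine hmax ⟨v * cs.simple (if Even k then j else i), ?_, by omega⟩
    rw [CoxeterSystem.alternatingWord_succ', cs.wordProd_cons, hv]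
    simp [mul_assoc]
  have hc' : cs.length v < cs.length (v * cs.simple (if Even k then i else j)) := by
    clear_value k
    obtain ⟨k', rfl⟩ : ∃ k', k = k' + 1 := ⟨k - 1, by omega⟩
    have e : (if Even (k' + 1) then i else j) = if Even k' then j else i := by
      by_cases h : Even k' <;> simp [h, Nat.even_add_one]
    rw [CoxeterSystem.alternatingWord_succ', cs.wordProd_cons, ← mul_assoc, ← e] at hv
    have h1 := cs.length_mul_le (v * cs.simple (if Even (k' + 1) then i else j))
      (cs.wordProd (CoxeterSystem.alternatingWord i j k'))
    rw [← hv] at h1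
    have h2 := cs.length_wordProd_le (CoxeterSystem.alternatingWord i j k')
    rw [CoxeterSystem.length_alternatingWord] at h2
    omega
  have hvi : cs.length v < cs.length (v * cs.simple i) := by
    by_cases h : Even k <;> simp only [h, if_true, if_false] at hc hc' <;> assumption
  have hvj : cs.length v < cs.length (v * cs.simple j) := by
    by_cases h : Even k <;> simp only [h, if_true, if_false] at hc hc' <;> assumption
  have pi := ih (cs.length v) (by omega) v i hvi rfl
  have pj := ih (cs.length v) (by omega) v j hvj rfl
  -- bound on k
  have hkm : M i j = 0 ∨ k + 1 ≤ M i j := by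
    by_contra hcon
    push Not at hcon
    apply cs.not_isReduced_alternatingWord j i (m := k + 1)
    · rw [M.symmetric]; exact hcon.1
    · rw [M.symmetric]; omega
    · unfold CoxeterSystem.IsReduced
      apply le_antisymm (cs.length_wordProd_le _)
      rw [CoxeterSystem.length_alternatingWord]
      have e : w * cs.simple i = v * cs.wordProd (CoxeterSystem.alternatingWord j i (k + 1)) := by
        rw [CoxeterSystem.alternatingWord_succ, cs.wordProd_concat, ← mul_assoc, ← hv]
      have := cs.length_mul_le v (cs.wordProd (CoxeterSystem.alternatingWord j i (k + 1)))
      rw [← e] at this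
      omega
  have c0 : 0 ≤ dihCoef (M i j) k := dihCoef_nonneg (hkm.imp_right (by omega))
  have c1 : 0 ≤ dihCoef (M i j) (k + 1) := dihCoef_nonneg hkm
  rw [hv, map_mul, LinearEquiv.mul_apply, geom_alternating cs hij]
  split_ifs
  · rw [map_add, map_smul, map_smul]
    exact add_nonneg (smul_nonneg c1 pi) (smul_nonneg c0 pj)
  · rw [map_add, map_smul, map_smul]
    exact add_nonneg (smul_nonneg c0 pi) (smul_nonneg c1 pj)

theorem geom_faithful (cs : CoxeterSystem M W) {w : W} (h : geom cs w = 1) : w = 1 := by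
  by_contra hw
  obtain ⟨j, hj⟩ := cs.exists_rightDescent_of_ne_one hw
  have h1 : 0 ≤ geom cs (w * cs.simple j) (sroot j) := by
    apply geom_nonneg
    rw [cs.simple_mul_simple_cancel_right]
    exact hj
  rw [map_mul, h, one_mul, geom_simple, srefl_apply, titsForm_sroot, titsEntry_self] at h1
  have := h1 j
  norm_num [sroot_self] at this

/-- A conjugate of a simple reflection acts as a reflection. -/
theorem geom_conj (cs : CoxeterSystem M W) (w : W) (i : B) (x : B → ℝ) :
    geom cs (w * cs.simple i * w⁻¹) x =
      x - (2 * titsForm M x (geom cs w (sroot i))) • geom cs w (sroot i) := by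
  have e : geom cs w (geom cs w⁻¹ x) = x := by
    rw [← LinearEquiv.mul_apply, ← map_mul]; simp
  rw [map_mul, map_mul, LinearEquiv.mul_apply, LinearEquiv.mul_apply, geom_simple, srefl_apply,
    map_sub, map_smul, e, ← titsForm_geom cs w, e]

/-- If `s` and a reflection generate a finite group then the corresponding roots have form
value larger than `-1`. -/
theorem form_gt_neg_one (cs : CoxeterSystem M W) (s j : B) (w : W)
    (hpos : 0 ≤ geom cs w (sroot j))
    (hfin : (Subgroup.closure {cs.simple s, w * cs.simple j * w⁻¹} : Set W).Finite) :
    -1 < titsForm M (sroot s) (geom cs w (sroot j)) := by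
  by_contra hcon
  push Not at hcon
  set γ := geom cs w (sroot j) with hγ
  set t := w * cs.simple j * w⁻¹ with ht
  set a := -titsForm M (sroot s) γ with ha
  have ha1 : 1 ≤ a := by linarith
  have hsγ : titsForm M (sroot s) γ = -a := by rw [ha]; ring
  have hγs : titsForm M γ (sroot s) = -a := by rw [titsForm_comm, hsγ]
  have hγγ : titsForm M γ γ = 1 := by
    rw [hγ, titsForm_geom, titsForm_sroot, titsEntry_self]
  have hss : titsForm M (sroot s) (sroot s) = 1 := by rw [titsForm_sroot, titsEntry_self]
  have hg : cs.simple s * t ∈ Subgroup.closure {cs.simple s, t} :=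
    mul_mem (Subgroup.subset_closure (by simp)) (Subgroup.subset_closure (by simp))
  have hord : IsOfFinOrder (cs.simple s * t) := by
    have : Finite (Subgroup.closure {cs.simple s, t}) := hfin
    have h := isOfFinOrder_of_finite (⟨_, hg⟩ : Subgroup.closure {cs.simple s, t})
    exact Submonoid.isOfFinOrder_coe.2 h
  obtain ⟨n, hn, hn1⟩ := isOfFinOrder_iff_pow_eq_one.1 hord
  have claim : ∀ n : ℕ, ∃ x y : ℝ, geom cs ((cs.simple s * t) ^ n) (sroot s) =
      x • sroot s + y • γ ∧ 0 ≤ y ∧ y < x ∧ (0 < n → 0 < y) := by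
    intro n
    induction n with
    | zero => exact ⟨1, 0, by simp, le_rfl, one_pos, by simp⟩
    | succ n ih =>
      obtain ⟨x, y, h, hy, hxy, -⟩ := ih
      have e1 : x < 2 * a * x - y := by nlinarith
      have e2 : 2 * a * x - y < 2 * a * (2 * a * x - y) - x := by nlinarith
      refine ⟨2 * a * (2 * a * x - y) - x, 2 * a * x - y, ?_, by linarith, e2,
        fun _ => by linarith⟩
      rw [pow_succ', map_mul, LinearEquiv.mul_apply, h, map_mul, LinearEquiv.mul_apply, ht,
        geom_conj, geom_simple, srefl_apply, ← hγ]
      simp only [map_add, map_sub, map_smul, LinearMap.add_apply, LinearMap.sub_apply,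
        LinearMap.smul_apply, hsγ, hγs, hγγ, hss, smul_eq_mul]
      module
  obtain ⟨x, y, h, -, -, hy⟩ := claim n
  have hy := hy hn
  rw [hn1, map_one] at h
  have hz : ∀ i, i ≠ s → γ i = 0 := by
    intro i hi
    have := congrFun h i
    simp [sroot_ne hi] at this
    exact this.resolve_left hy.ne'
  have : γ = γ s • sroot s := by
    ext i
    by_cases hi : i = s
    · subst hi; simp [sroot_self]
    · simp [sroot_ne hi, hz i hi]
  have h2 : titsForm M (sroot s) γ = γ s := by
    rw [this, map_smul, hss]; simp [sroot_self]
  have := hpos s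
  simp only [Pi.zero_apply] at this
  linarith

theorem closure_pair_finite (cs : CoxeterSystem M W) {i j : B} (h : M i j ≠ 0) :
    (Subgroup.closure {cs.simple i, cs.simple j} : Set W).Finite := by
  set a := cs.simple i
  set b := cs.simple j
  have haa : a * a = 1 := cs.simple_mul_simple_self i
  have hbb : b * b = 1 := cs.simple_mul_simple_self j
  have hfin : ((Subgroup.zpowers (a * b) : Subgroup W) : Set W).Finite := by
    rw [finite_zpowers, isOfFinOrder_iff_pow_eq_one]
    exact ⟨M i j, Nat.pos_of_ne_zero h, cs.simple_mul_simple_pow i j⟩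
  have hab : a * b ∈ Subgroup.zpowers (a * b) := Subgroup.mem_zpowers _
  have hba : b * a ∈ Subgroup.zpowers (a * b) := by
    have := inv_mem hab
    rwa [mul_inv_rev, cs.inv_simple, cs.inv_simple] at this
  have key : ∀ x y : W, x ∈ (Subgroup.zpowers (a * b) : Set W) ∪
      (fun x => x * a) '' (Subgroup.zpowers (a * b) : Set W) → y ∈ ({a, b} : Set W) →
      x * y ∈ (Subgroup.zpowers (a * b) : Set W) ∪
        (fun x => x * a) '' (Subgroup.zpowers (a * b) : Set W) := by
    intro x y ih hx
    rcases ih with ih | ⟨z, hz, rfl⟩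
    · rcases hx with rfl | rfl
      · exact Or.inr ⟨_, ih, rfl⟩
      · refine Or.inr ⟨x * (b * a), mul_mem ih hba, ?_⟩
        simp [mul_assoc, haa]
    · rcases hx with rfl | rfl
      · left; simpa [mul_assoc, haa] using hz
      · left; simpa [mul_assoc] using mul_mem hz hab
  apply (hfin.union (hfin.image (fun x => x * a))).subset
  intro x hx
  induction hx using Subgroup.closure_induction_right with
  | one => exact Or.inl (one_mem _)
  | mul_right x hx' y hx ih => exact key x y ih hx
  | mul_inv_cancel x hx' y hx ih =>
    have hinv : y⁻¹ = y := by
      rcases hx with rfl | rfl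
      · exact cs.inv_simple _
      · exact cs.inv_simple _
    rw [hinv]
    exact key x y ih hx

theorem two_of_commute (cs : CoxeterSystem M W) {i j : B} (hij : i ≠ j)
    (h : Commute (cs.simple i) (cs.simple j)) : M i j = 2 := by
  by_contra h2
  have hle := titsEntry_le_neg_half hij h2
  have h1 := congrArg (fun g => geom cs g (sroot j) i) h.eq
  simp only [map_mul, LinearEquiv.mul_apply, geom_simple, srefl_apply, map_sub, map_smul,
    titsForm_sroot, titsEntry_self, LinearMap.sub_apply, LinearMap.smul_apply, smul_eq_mul,
    Pi.sub_apply, Pi.smul_apply, sroot_self, sroot_ne hij, titsEntry_symm j i] at h1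
  linarith

theorem base_step (cs : CoxeterSystem M W) {s j : B} {w : W} (hb : IsBase cs s w)
    (hj : cs.IsRightDescent w j) :
    IsBase cs s (w * cs.simple j) ∧
    cs.length ((w * cs.simple j)⁻¹ * cs.simple s * (w * cs.simple j)) <
      cs.length ((w * cs.simple j)⁻¹ * cs.simple s * (w * cs.simple j) * cs.simple j) ∧
    cs.length (cs.simple j * ((w * cs.simple j)⁻¹ * cs.simple s * (w * cs.simple j)) * cs.simple j)
      = cs.length ((w * cs.simple j)⁻¹ * cs.simple s * (w * cs.simple j)) + 2 := by
  rw [cs.isRightDescent_iff] at hj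
  set w' := w * cs.simple j with hw'
  have hw : w = w' * cs.simple j := by simp [hw']
  set r := w'⁻¹ * cs.simple s * w' with hr
  obtain ⟨hb1, hb2⟩ := hb
  have e : w⁻¹ * cs.simple s * w = cs.simple j * r * cs.simple j := by
    rw [hw, hr]; simp [mul_assoc]
  rw [e] at hb1
  have l1 : cs.length (cs.simple j * r * cs.simple j) ≤ cs.length (r * cs.simple j) + 1 := by
    have := cs.length_mul_le (cs.simple j) (r * cs.simple j)
    rw [cs.length_simple, ← mul_assoc] at this
    omega
  have l2 : cs.length (r * cs.simple j) ≤ cs.length r + 1 := by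
    have := cs.length_mul_le r (cs.simple j)
    rwa [cs.length_simple] at this
  have l3 : cs.length r ≤ 2 * cs.length w' + 1 := by
    have h1 := cs.length_mul_le (w'⁻¹ * cs.simple s) w'
    have h2 := cs.length_mul_le w'⁻¹ (cs.simple s)
    rw [cs.length_simple, cs.length_inv] at h2
    rw [← hr] at h1
    omega
  refine ⟨⟨by rw [← hr]; omega, ?_⟩, by omega, by omega⟩
  intro t ht hlt
  apply hb2 t ht
  have := cs.length_mul_le (t * w') (cs.simple j)
  rw [cs.length_simple, mul_assoc, ← hw] at this
  omega

/-- The value of the form at an ascent of a base. -/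
theorem base_form (cs : CoxeterSystem M W) {s j : B} {w : W} (hb : IsBase cs s w)
    (hj : cs.IsRightDescent w j) (hpos : 0 ≤ geom cs (w * cs.simple j)⁻¹ (sroot s)) :
    -1 < titsForm M (geom cs (w * cs.simple j)⁻¹ (sroot s)) (sroot j) ∧
    titsForm M (geom cs (w * cs.simple j)⁻¹ (sroot s)) (sroot j) < 0 := by
  obtain ⟨-, h1, h2⟩ := base_step cs hb hj
  have hj' := (cs.isRightDescent_iff).1 hj
  set w' := w * cs.simple j with hw'
  have hw : w = w' * cs.simple j := by simp [hw']
  set β := geom cs w'⁻¹ (sroot s) with hβ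
  constructor
  · have hγ : 0 ≤ geom cs w' (sroot j) := by
      apply geom_nonneg
      rw [← hw]; omega
    have := form_gt_neg_one cs s j w' hγ (by
      apply hb.2
      · exact ⟨w', j, rfl⟩
      · rw [hw]
        simp only [mul_assoc, inv_mul_cancel_left, cs.simple_mul_simple_self, mul_one]
        rw [← hw]; omega)
    have e : titsForm M (sroot s) (geom cs w' (sroot j)) = titsForm M β (sroot j) := by
      rw [← titsForm_geom cs w' β, hβ, ← LinearEquiv.mul_apply, ← map_mul]; simp
    rwa [e] at this
  · have hr := geom_conj cs w'⁻¹ s (sroot j)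
    rw [inv_inv, ← hβ, titsForm_comm] at hr
    have hrpos := geom_nonneg cs _ j h1
    rw [hr] at hrpos
    by_contra hcon
    push Not at hcon
    rcases hcon.eq_or_lt with h0 | hlt
    · -- orthogonal case: commuting
      rw [← h0, mul_zero, zero_smul, sub_zero] at hr
      set r := w'⁻¹ * cs.simple s * w' with hrdef
      have hcomm : r * cs.simple j * r⁻¹ * cs.simple j = 1 := by
        apply geom_faithful cs
        rw [map_mul]
        have : geom cs (r * cs.simple j * r⁻¹) = srefl M j := by
          ext1 x
          rw [geom_conj, hr, srefl_apply]
        rw [this, geom_simple, srefl_sq]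
      have e : cs.simple j * r * cs.simple j = r := by
        have h3 : r * cs.simple j * r⁻¹ = cs.simple j := by
          rw [mul_eq_one_iff_eq_inv.1 hcomm, cs.inv_simple]
        have h4 : r * cs.simple j = cs.simple j * r := mul_inv_eq_iff_eq_mul.1 h3
        rw [mul_assoc, h4, cs.simple_mul_simple_cancel_left]
      rw [e] at h2
      omega
    · set b := titsForm M β (sroot j) with hb
      have hz : ∀ i, i ≠ j → β i = 0 := by
        intro i hi
        have a1 := hrpos i
        have a2 := hpos i
        simp [sroot_ne hi] at a1 a2
        nlinarith
      have hβj : β = β j • sroot j := by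
        ext i
        by_cases hi : i = j
        · subst hi; simp [sroot_self]
        · simp [sroot_ne hi, hz i hi]
      have e1 : b = β j := by
        rw [hb, hβj, map_smul]
        simp [titsForm_sroot, titsEntry_self, sroot_self]
      have e2 : titsForm M β β = 1 := by
        rw [hβ, titsForm_geom, titsForm_sroot, titsEntry_self]
      have e3 : titsForm M β β = b * b := by
        conv_lhs => rw [hβj]
        rw [map_smul, map_smul, LinearMap.smul_apply, titsForm_sroot, titsEntry_self, ← e1]
        simp
      have a1 := hrpos j
      simp [sroot_self, ← e1] at a1
      nlinarith

/-- The support of a vector. -/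
def vsupp (x : B → ℝ) : Set B := {i | x i ≠ 0}

/-- The Coxeter diagram restricted to a subset. -/
def diag (M : CoxeterMatrix B) (K : Set B) : SimpleGraph B where
  Adj i j := i ≠ j ∧ i ∈ K ∧ j ∈ K ∧ M i j ≠ 2
  symm := ⟨fun i j h => ⟨h.1.symm, h.2.2.1, h.2.1, by rw [M.symmetric]; exact h.2.2.2⟩⟩
  loopless := ⟨fun _ h => h.1 rfl⟩

/-- The inductive invariant of bases. -/
structure GoodVec (M : CoxeterMatrix B) (s : B) (x : B → ℝ) : Prop where
  coef : ∀ i, x i = 0 ∨ 1 ≤ x i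
  core : s ∈ vsupp x
  fin : ∀ i ∈ vsupp x, ∀ j ∈ vsupp x, M i j ≠ 0
  forest : (diag M (vsupp x)).IsAcyclic
  irr : ∀ K L : Set B, K ∪ L = vsupp x → (∀ k ∈ K, ∀ l ∈ L, k ≠ l → M k l = 2) →
    Disjoint K L → s ∈ K → L = ∅

theorem GoodVec.nonneg {s : B} {x : B → ℝ} (h : GoodVec M s x) : 0 ≤ x := by
  intro i
  rcases h.coef i with h | h
  · exact h.ge
  · exact le_trans zero_le_one h

theorem goodVec_sroot (s : B) : GoodVec M s (sroot s) := by
  have hs : vsupp (sroot s) = {s} := by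
    ext i
    by_cases h : i = s
    · subst h; simp [vsupp, sroot_self]
    · simp [vsupp, sroot_ne h, h]
  refine ⟨fun i => ?_, by simp [hs], ?_, ?_, ?_⟩
  · by_cases h : i = s
    · subst h; simp [sroot_self]
    · simp [sroot_ne h]
  · rw [hs]
    rintro i rfl j rfl
    simp
  · have : diag M (vsupp (sroot s)) = ⊥ := by
      ext i j
      simp only [diag, hs, SimpleGraph.bot_adj, iff_false]
      rintro ⟨h, rfl, rfl, -⟩
      exact h rfl
    rw [this]
    exact SimpleGraph.isAcyclic_bot
  · intro K L hKL _ hd hK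
    ext l
    simp only [Set.mem_empty_iff_false, iff_false]
    intro hl
    have : l ∈ vsupp (sroot s) := hKL ▸ Or.inr hl
    rw [hs] at this
    rw [Set.mem_singleton_iff.1 this] at hl
    exact Set.disjoint_left.1 hd hK hl

theorem diag_insert_acyclic {K : Set B} {i j : B} (hK : (diag M K).IsAcyclic) (hj : j ∉ K)
    (hu : ∀ k ∈ K, M k j ≠ 2 → k = i) : (diag M (insert j K)).IsAcyclic := by
  by_cases hij : i = j
  · subst hij
    apply hK.anti
    rintro a b ⟨h1, h2, h3, h4⟩
    rcases h2 with rfl | h2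
    · rcases h3 with rfl | h3
      · exact absurd rfl h1
      · exact absurd (hu b h3 (by rw [M.symmetric]; exact h4)).symm h1
    · rcases h3 with rfl | h3
      · exact absurd (hu a h2 h4) h1
      · exact ⟨h1, h2, h3, h4⟩
  have hnr : ¬ (diag M K).Reachable i j := by
    rintro ⟨p⟩
    have := p.reverse
    cases this with
    | nil => exact hij rfl
    | cons h _ => exact hj h.2.1
  apply (SimpleGraph.IsAcyclic.sup_edge_of_not_reachable hnr hK).anti
  rintro a b ⟨h1, h2, h3, h4⟩
  rw [SimpleGraph.sup_adj, SimpleGraph.edge_adj]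
  rcases h2 with rfl | h2
  · rcases h3 with rfl | h3
    · exact absurd rfl h1
    · exact Or.inr ⟨Or.inr ⟨rfl, (hu b h3 (by rw [M.symmetric]; exact h4))⟩, h1⟩
  · rcases h3 with rfl | h3
    · exact Or.inr ⟨Or.inl ⟨(hu a h2 h4), rfl⟩, h1⟩
    · exact Or.inl ⟨h1, h2, h3, h4⟩

theorem GoodVec.step {s j : B} {x : B → ℝ} (h : GoodVec M s x)
    (h1 : -1 < titsForm M x (sroot j)) (h2 : titsForm M x (sroot j) < 0) :
    GoodVec M s (srefl M j x) ∧ vsupp (srefl M j x) = insert j (vsupp x) := by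
  set b := titsForm M x (sroot j) with hb
  have hne : ∀ i, i ≠ j → srefl M j x i = x i := by
    intro i hi
    simp [srefl_apply, sroot_ne hi]
  have hj : srefl M j x j = x j - 2 * b := by
    simp [srefl_apply, sroot_self, ← hb]
  have hnn := h.nonneg
  have hs : vsupp (srefl M j x) = insert j (vsupp x) := by
    ext i
    by_cases hi : i = j
    · subst hi
      have := hnn i
      simp only [Pi.zero_apply] at this
      simp only [vsupp, Set.mem_ofPred_eq, hj, Set.mem_insert_iff, true_or, iff_true]
      linarith
    · simp [vsupp, hne i hi, hi]
  refine ⟨?_, hs⟩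
  by_cases hjs : j ∈ vsupp x
  · have hs' : vsupp (srefl M j x) = vsupp x := by rw [hs, Set.insert_eq_of_mem hjs]
    refine ⟨fun i => ?_, by rw [hs']; exact h.core, by rw [hs']; exact h.fin,
      by rw [hs']; exact h.forest, by rw [hs']; exact h.irr⟩
    by_cases hi : i = j
    · subst hi
      have := (h.coef i).resolve_left hjs
      right; rw [hj]; linarith
    · rw [hne i hi]; exact h.coef i
  · have hxj : x j = 0 := by simpa [vsupp] using hjs
    have hsum : b = ∑ i, x i * titsEntry M i j := titsForm_apply_sroot x j
    have hle : ∀ i, x i * titsEntry M i j ≤ 0 := by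
      intro i
      by_cases hi : i = j
      · subst hi; rw [hxj]; simp
      · exact mul_nonpos_of_nonneg_of_nonpos (hnn i) (titsEntry_nonpos hi)
    have hhalf : ∀ i ∈ vsupp x, M i j ≠ 2 → x i * titsEntry M i j ≤ -(1 / 2) := by
      intro i hi hM
      have hij : i ≠ j := fun e => hjs (e ▸ hi)
      have a1 := (h.coef i).resolve_left hi
      have a2 := titsEntry_le_neg_half hij hM
      nlinarith
    have hbi : ∀ i, b ≤ x i * titsEntry M i j := by
      intro i
      rw [hsum, ← Finset.add_sum_erase _ _ (Finset.mem_univ i)]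
      have := Finset.sum_nonpos (s := Finset.univ.erase i) (fun k _ => hle k)
      linarith
    obtain ⟨i, hi, hM⟩ : ∃ i ∈ vsupp x, M i j ≠ 2 := by
      by_contra hcon
      push Not at hcon
      have : b = 0 := by
        rw [hsum]
        apply Finset.sum_eq_zero
        intro i _
        by_cases hi : i ∈ vsupp x
        · rw [titsEntry_of_two (hcon i hi), mul_zero]
        · have : x i = 0 := by simpa [vsupp] using hi
          rw [this, zero_mul]
      linarith
    have hu : ∀ k ∈ vsupp x, M k j ≠ 2 → k = i := by
      intro k hk hkM
      by_contra hki
      have a1 := hhalf i hi hM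
      have a2 := hhalf k hk hkM
      have : b ≤ x i * titsEntry M i j + x k * titsEntry M k j := by
        rw [hsum, ← Finset.add_sum_erase _ _ (Finset.mem_univ i),
          ← Finset.add_sum_erase _ _ (show k ∈ Finset.univ.erase i by simp [hki])]
        have := Finset.sum_nonpos (s := (Finset.univ.erase i).erase k) (fun k _ => hle k)
        linarith
      linarith
    have hfin : ∀ k ∈ vsupp x, M k j ≠ 0 := by
      intro k hk h0
      have a1 := (h.coef k).resolve_left hk
      have a2 := hbi k
      have a3 : titsEntry M k j = -1 := by simp [titsEntry, h0]
      rw [a3] at a2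
      linarith
    refine ⟨fun k => ?_, by rw [hs]; exact Or.inr h.core, ?_, ?_, ?_⟩
    · by_cases hk : k = j
      · subst hk
        right
        rw [hj, hxj]
        have := hhalf i hi hM
        have := hbi i
        linarith
      · rw [hne k hk]; exact h.coef k
    · rw [hs]
      rintro k (rfl | hk) l (rfl | hl)
      · simp
      · rw [M.symmetric]; exact hfin l hl
      · exact hfin k hk
      · exact h.fin k hk l hl
    · rw [hs]
      exact diag_insert_acyclic h.forest hjs hu
    · rw [hs]
      intro K L hKL hcomm hd hsK
      have hsj : s ≠ j := fun e => hjs (e ▸ h.core)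
      have hL : L \ {j} = ∅ := by
        apply h.irr (K \ {j}) (L \ {j})
        · rw [← Set.union_sdiff_distrib, hKL]
          simp [hjs]
        · exact fun k hk l hl => hcomm k hk.1 l hl.1
        · exact hd.mono Set.sdiff_subset Set.sdiff_subset
        · exact ⟨hsK, hsj⟩
      ext l
      simp only [Set.mem_empty_iff_false, iff_false]
      intro hl
      have hlj : l = j := by
        by_contra hne
        have : l ∈ L \ {j} := ⟨hl, hne⟩
        rw [hL] at this
        exact this
      subst hlj
      have hij : i ≠ l := fun e => hjs (e ▸ hi)
      have hiK : i ∈ K := by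
        have : i ∈ K ∪ L := hKL ▸ Or.inr hi
        rcases this with h | h
        · exact h
        · have : i ∈ L \ {l} := ⟨h, hij⟩
          rw [hL] at this
          exact absurd this (Set.notMem_empty _)
      exact hM (hcomm i hiK l hl hij)

theorem base_good (cs : CoxeterSystem M W) (s : B) (w : W) (hb : IsBase cs s w) :
    GoodVec M s (geom cs w⁻¹ (sroot s)) ∧
      w ∈ Subgroup.closure (cs.simple '' vsupp (geom cs w⁻¹ (sroot s))) := by
  induction hn : cs.length w using Nat.strong_induction_on generalizing w with
  | _ n ih =>
  by_cases hw : w = 1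
  · subst hw
    simpa using goodVec_sroot s
  obtain ⟨j, hj⟩ := cs.exists_rightDescent_of_ne_one hw
  have hj' := (cs.isRightDescent_iff).1 hj
  obtain ⟨g, hmem⟩ := ih _ (by omega) (w * cs.simple j) (base_step cs hb hj).1 rfl
  obtain ⟨f1, f2⟩ := base_form cs hb hj g.nonneg
  obtain ⟨g', hs⟩ := g.step f1 f2
  have e : geom cs w⁻¹ (sroot s) = srefl M j (geom cs (w * cs.simple j)⁻¹ (sroot s)) := by
    rw [← geom_simple cs, ← LinearEquiv.mul_apply, ← map_mul]
    congr 2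
    simp
  rw [e]
  refine ⟨g', ?_⟩
  rw [hs]
  have h1 : w * cs.simple j ∈ Subgroup.closure
      (cs.simple '' insert j (vsupp (geom cs (w * cs.simple j)⁻¹ (sroot s)))) :=
    Subgroup.closure_mono (Set.image_mono (Set.subset_insert _ _)) hmem
  have h2 : cs.simple j ∈ Subgroup.closure
      (cs.simple '' insert j (vsupp (geom cs (w * cs.simple j)⁻¹ (sroot s)))) :=
    Subgroup.subset_closure ⟨j, Set.mem_insert _ _, rfl⟩
  have := mul_mem h1 h2
  rwa [cs.simple_mul_simple_cancel_right] at this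

theorem vsupp_geom_subset (cs : CoxeterSystem M W) (J : Set B) (g : W)
    (hg : g ∈ Subgroup.closure (cs.simple '' J)) (x : B → ℝ) (hx : vsupp x ⊆ J) :
    vsupp (geom cs g x) ⊆ J := by
  have key : ∀ j ∈ J, ∀ x : B → ℝ, vsupp x ⊆ J → vsupp (srefl M j x) ⊆ J := by
    intro j hj x hx i hi
    by_cases hij : i = j
    · exact hij ▸ hj
    · apply hx
      simpa [vsupp, srefl_apply, sroot_ne hij] using hi
  induction hg using Subgroup.closure_induction_left with
  | one => simpa using hx
  | mul_left y hy z hz ih =>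
    obtain ⟨j, hj, rfl⟩ := hy
    rw [map_mul, LinearEquiv.mul_apply, geom_simple]
    exact key j hj _ ih
  | inv_mul_cancel y hy z hz ih =>
    obtain ⟨j, hj, rfl⟩ := hy
    rw [cs.inv_simple, map_mul, LinearEquiv.mul_apply, geom_simple]
    exact key j hj _ ih

end geometric

/-- The support of a base is irreducible and tree-2-spherical: every pair of
its elements generates a finite subgroup, and the graph on it whose edges are the pairs whose
product has order at least 3 is a forest. -/
theorem support_irreducible_tree_two_spherical
    [Finite B] (cs : CoxeterSystem M W) (s : B) (w : W)
    (hbase : IsBase cs s w) (J : Set B) (hJ : IsSupport cs s w J) :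
    IrreducibleSubset cs J ∧ TwoSpherical cs J ∧
      (SimpleGraph.fromRel fun j j' : J =>
        3 ≤ orderOf (cs.simple j * cs.simple j')).IsAcyclic := by
  classical
  have := Fintype.ofFinite B
  obtain ⟨g, hmem⟩ := base_good cs s w hbase
  set β := geom cs w⁻¹ (sroot s) with hβ
  obtain ⟨hsJ, hwJ, hmin⟩ := hJ
  have hJβ : J = vsupp β := by
    apply Set.Subset.antisymm
    · exact hmin _ g.core hmem
    · apply vsupp_geom_subset cs J _ (inv_mem hwJ)
      intro i hi
      by_cases h : i = s
      · exact h ▸ hsJ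
      · exact absurd (sroot_ne h) hi
  refine ⟨?_, ?_, ?_⟩
  · rintro ⟨K, L, hK, hL, hd, hKL, hcomm⟩
    have hs : s ∈ K ∪ L := hKL ▸ hsJ
    rcases hs with hs | hs
    · exact hL.ne_empty (g.irr K L (hKL.trans hJβ)
        (fun k hk l hl hne => two_of_commute cs hne (hcomm k hk l hl)) hd hs)
    · exact hK.ne_empty (g.irr L K ((Set.union_comm L K).trans (hKL.trans hJβ))
        (fun l hl k hk hne => two_of_commute cs hne (hcomm k hk l hl).symm) hd.symm hs)
  · intro i hi j hj
    exact closure_pair_finite cs (g.fin i (hJβ ▸ hi) j (hJβ ▸ hj))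
  · have h3 : ∀ i j : B, 3 ≤ orderOf (cs.simple i * cs.simple j) → M i j ≠ 2 := by
      intro i j h h2
      have h4 := cs.simple_mul_simple_pow i j
      rw [h2] at h4
      have := orderOf_le_of_pow_eq_one (by norm_num) h4
      omega
    let f : (SimpleGraph.fromRel fun j j' : J =>
        3 ≤ orderOf (cs.simple j * cs.simple j')) →g diag M (vsupp β) :=
      { toFun := fun j => j
        map_rel' := by
          intro a b hab
          rw [SimpleGraph.fromRel_adj] at hab
          refine ⟨fun h => hab.1 (Subtype.ext h), hJβ ▸ a.2, hJβ ▸ b.2, ?_⟩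
          rcases hab.2 with h | h
          · exact h3 _ _ h
          · rw [M.symmetric]; exact h3 _ _ h }
    exact g.forest.comap f Subtype.val_injective
end

section
/- Let (W,S) be a Coxeter system with S finite, let J ⊆ S be an irreducible subset generating a finite subgroup, and let s ∈ J. Then there exists a simple base with core s and support J. -/
variable {B : Type*} {W : Type*} [Group W] {M : CoxeterMatrix B}

namespace SimpleBase

open Module Polynomial.Chebyshev

/-! ### Strong exchange -/

section Exchange

open Classical in
/-- The action of a simple reflection on `W × ZMod 2`. -/
noncomputable def sigmaFun (cs : CoxeterSystem M W) (i : B) (p : W × ZMod 2) : W × ZMod 2 :=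
  (cs.simple i * p.1 * cs.simple i, p.2 + if p.1 = cs.simple i then 1 else 0)

open Classical in
theorem sigma_invol (cs : CoxeterSystem M W) (i : B) (p : W × ZMod 2) :
    sigmaFun cs i (sigmaFun cs i p) = p := by
  have h : cs.simple i * p.1 * cs.simple i = cs.simple i ↔ p.1 = cs.simple i := by
    constructor
    · intro h
      have := congrArg (fun x => cs.simple i * x * cs.simple i) h
      simpa [mul_assoc] using this
    · intro h
      simp [h]
  ext
  · simp [sigmaFun, mul_assoc]
  · have h' : (sigmaFun cs i p).1 = cs.simple i ↔ p.1 = cs.simple i := h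
    change (sigmaFun cs i p).2 + (if (sigmaFun cs i p).1 = cs.simple i then 1 else 0) = p.2
    change p.2 + (if p.1 = cs.simple i then 1 else 0) +
      (if (sigmaFun cs i p).1 = cs.simple i then 1 else 0) = p.2
    by_cases hp : p.1 = cs.simple i
    · rw [if_pos hp, if_pos (h'.2 hp), add_assoc, show (1 : ZMod 2) + 1 = 0 from rfl, add_zero]
    · rw [if_neg hp, if_neg (fun hx => hp (h'.1 hx)), add_zero, add_zero]

/-- The permutation of `W × ZMod 2` attached to a simple reflection. -/
noncomputable def sigma (cs : CoxeterSystem M W) (i : B) : Equiv.Perm (W × ZMod 2) :=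
  ⟨sigmaFun cs i, sigmaFun cs i, sigma_invol cs i, sigma_invol cs i⟩

theorem simple_pow_comm (cs : CoxeterSystem M W) (i j : B) (n : ℕ) :
    ((cs.simple i * cs.simple j) ^ n)⁻¹ * cs.simple j
      = cs.simple j * (cs.simple i * cs.simple j) ^ n := by
  induction n with
  | zero => simp
  | succ n ih =>
    rw [pow_succ' _ n, mul_inv_rev, ← pow_succ' _ n, pow_succ _ n]
    have : (cs.simple i * cs.simple j)⁻¹ * cs.simple j
        = cs.simple j * (cs.simple i * cs.simple j) := by simp [mul_assoc]
    rw [mul_assoc, this, ← mul_assoc, ih]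
    simp [mul_assoc]

open Classical in
theorem sigma_pow (cs : CoxeterSystem M W) (i j : B) (n : ℕ) (r : W) (e : ZMod 2) :
    ((sigma cs i * sigma cs j) ^ n) (r, e) =
      ((cs.simple i * cs.simple j) ^ n * r * ((cs.simple i * cs.simple j) ^ n)⁻¹,
        e + ∑ k ∈ Finset.range (2 * n),
          if r = cs.simple j * (cs.simple i * cs.simple j) ^ k then 1 else 0) := by
  induction n with
  | zero => simp
  | succ n ih =>
    rw [pow_succ', Equiv.Perm.mul_apply, ih, Equiv.Perm.mul_apply]
    set c := cs.simple i * cs.simple j with hc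
    have e1 : c ^ n * r * (c ^ n)⁻¹ = cs.simple j ↔ r = cs.simple j * c ^ (2 * n) := by
      have := simple_pow_comm cs i j n
      rw [← hc] at this
      rw [two_mul, pow_add, ← mul_assoc, ← this, mul_inv_eq_iff_eq_mul, mul_assoc (_⁻¹),
        eq_inv_mul_iff_mul_eq]
    have e2 : cs.simple j * (c ^ n * r * (c ^ n)⁻¹) * cs.simple j = cs.simple i ↔
        r = cs.simple j * c ^ (2 * n + 1) := by
      have := simple_pow_comm cs i j n
      rw [← hc] at this
      have h3 : cs.simple j * c ^ (2 * n + 1) = (c ^ n)⁻¹ * (cs.simple j * c) * c ^ n := by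
        rw [show 2 * n + 1 = n + (1 + n) by ring, pow_add, pow_add, pow_one,
          ← mul_assoc (cs.simple j) (c ^ n), ← this]
        simp only [mul_assoc]
      rw [h3, show cs.simple j * c = cs.simple j * cs.simple i * cs.simple j by
        rw [hc, mul_assoc]]
      constructor
      · intro h
        rw [← h]
        simp [mul_assoc]
      · intro h
        rw [h]
        simp [mul_assoc]
    rw [show 2 * (n + 1) = 2 * n + 1 + 1 by ring, Finset.sum_range_succ, Finset.sum_range_succ]
    ext
    · simp [sigma, sigmaFun, pow_succ', hc, mul_assoc]
    · simp only [sigma, Equiv.coe_fn_mk, sigmaFun, e1, e2]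
      ring

theorem sigma_liftable (cs : CoxeterSystem M W) : M.IsLiftable (sigma cs) := by
  classical
  intro i j
  ext1 ⟨r, e⟩
  rw [sigma_pow, cs.simple_mul_simple_pow, two_mul, Finset.sum_range_add]
  simp only [pow_add, cs.simple_mul_simple_pow, one_mul, ← two_mul]
  simp [show (2 : ZMod 2) = 0 from rfl]

/-- The permutation action on `W × ZMod 2`. -/
noncomputable def act (cs : CoxeterSystem M W) : W →* Equiv.Perm (W × ZMod 2) :=
  cs.lift ⟨sigma cs, sigma_liftable cs⟩

theorem act_simple (cs : CoxeterSystem M W) (i : B) (p : W × ZMod 2) :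
    act cs (cs.simple i) p = sigmaFun cs i p := by
  rw [act, cs.lift_apply_simple]; rfl

open Classical in
theorem act_word (cs : CoxeterSystem M W) (ω : List B) (r : W) (e : ZMod 2) :
    act cs (cs.wordProd ω) (r, e) =
      (cs.wordProd ω * r * (cs.wordProd ω)⁻¹, e + ((cs.rightInvSeq ω).count r : ℕ)) := by
  induction ω with
  | nil => simp
  | cons i ω ih =>
    rw [cs.wordProd_cons, map_mul, Equiv.Perm.mul_apply, ih, act_simple]
    have e1 : cs.wordProd ω * r * (cs.wordProd ω)⁻¹ = cs.simple i ↔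
        (cs.wordProd ω)⁻¹ * cs.simple i * cs.wordProd ω = r := by
      rw [mul_inv_eq_iff_eq_mul, mul_assoc, inv_mul_eq_iff_eq_mul, eq_comm]
    ext
    · simp [sigmaFun, mul_assoc]
    · simp only [sigmaFun, e1, CoxeterSystem.rightInvSeq, List.count_cons, beq_iff_eq]
      push_cast
      ring

theorem act_shift (cs : CoxeterSystem M W) (w r : W) (e : ZMod 2) :
    act cs w (r, e) = (w * r * w⁻¹, (act cs w (r, 0)).2 + e) := by
  classical
  obtain ⟨ω, rfl⟩ := cs.wordProd_surjective w
  simp [act_word, add_comm]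

theorem act_refl (cs : CoxeterSystem M W) {t : W} (ht : cs.IsReflection t) (e : ZMod 2) :
    act cs t (t, e) = (t, e + 1) := by
  obtain ⟨u, i, rfl⟩ := ht
  have h1 : act cs u⁻¹ (u * cs.simple i * u⁻¹, e) = 
      (cs.simple i, (act cs u⁻¹ (u * cs.simple i * u⁻¹, e)).2) := by
    rw [act_shift]; simp [mul_assoc]
  set a := (act cs u⁻¹ (u * cs.simple i * u⁻¹, e)).2
  have h2 : act cs u (cs.simple i, a) = (u * cs.simple i * u⁻¹, e) := by
    rw [← h1, ← Equiv.Perm.mul_apply, ← map_mul]; simp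
  rw [map_mul, map_mul, Equiv.Perm.mul_apply, Equiv.Perm.mul_apply, h1, act_simple]
  rw [act_shift] at h2
  have h3 := congrArg Prod.snd h2
  simp only at h3
  simp only [sigmaFun, cs.simple_mul_simple_self, one_mul, if_true]
  rw [act_shift, ← h3]
  simp [add_assoc]

theorem mem_ris_of_odd (cs : CoxeterSystem M W) (ω : List B) (t : W)
    (h : (act cs (cs.wordProd ω) (t, 0)).2 ≠ 0) : t ∈ cs.rightInvSeq ω := by
  classical
  rw [act_word] at h
  by_contra hc
  rw [List.count_eq_zero_of_not_mem hc] at h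
  simp at h

/-- Strong exchange, right-handed version. -/
theorem strong_exchange (cs : CoxeterSystem M W) (ω : List B) {t : W} (ht : cs.IsReflection t)
    (h : cs.length (cs.wordProd ω * t) < cs.length (cs.wordProd ω)) :
    t ∈ cs.rightInvSeq ω := by
  apply mem_ris_of_odd
  intro h0
  obtain ⟨ω', hω', hw⟩ := cs.exists_isReduced (cs.wordProd ω * t)
  have : (act cs (cs.wordProd ω') (t, 0)).2 ≠ 0 := by
    rw [← hw, map_mul, Equiv.Perm.mul_apply, act_refl cs ht, act_shift, h0]
    simp
  have h2 := (cs.isRightInversion_of_mem_rightInvSeq hω' (mem_ris_of_odd cs ω' t this)).2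
  rw [← hw, mul_assoc, ht.mul_self, mul_one] at h2
  omega

/-- Strong exchange, left-handed version. -/
theorem strong_exchange_left (cs : CoxeterSystem M W) (ω : List B) {t : W}
    (ht : cs.IsReflection t)
    (h : cs.length (t * cs.wordProd ω) < cs.length (cs.wordProd ω)) :
    t ∈ cs.leftInvSeq ω := by
  have := strong_exchange cs ω.reverse ht (by
    rw [cs.wordProd_reverse, cs.length_inv, ← cs.length_inv, mul_inv_rev, inv_inv, ht.inv]
    exact h)
  rw [cs.rightInvSeq_reverse] at this
  simpa using this

theorem wordProd_mem (cs : CoxeterSystem M W) (K : Set B) (ω : List B) (h : ∀ i ∈ ω, i ∈ K) :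
    cs.wordProd ω ∈ Subgroup.closure (cs.simple '' K) := by
  rw [CoxeterSystem.wordProd]
  apply Subgroup.list_prod_mem
  intro x hx
  obtain ⟨i, hi, rfl⟩ := List.mem_map.1 hx
  exact Subgroup.subset_closure ⟨i, h i hi, rfl⟩

theorem ris_mem (cs : CoxeterSystem M W) (K : Set B) (ω : List B) (h : ∀ i ∈ ω, i ∈ K)
    (t : W) (ht : t ∈ cs.rightInvSeq ω) : t ∈ Subgroup.closure (cs.simple '' K) := by
  induction ω with
  | nil => simp at ht
  | cons i ω ih =>
    rw [CoxeterSystem.rightInvSeq, List.mem_cons] at ht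
    have hw := wordProd_mem cs K ω (fun k hk => h k (by simp [hk]))
    rcases ht with rfl | ht
    · exact mul_mem (mul_mem (inv_mem hw) (Subgroup.subset_closure ⟨i, h i (by simp), rfl⟩)) hw
    · exact ih (fun k hk => h k (by simp [hk])) ht

theorem lis_mem (cs : CoxeterSystem M W) (K : Set B) (ω : List B) (h : ∀ i ∈ ω, i ∈ K)
    (t : W) (ht : t ∈ cs.leftInvSeq ω) : t ∈ Subgroup.closure (cs.simple '' K) := by
  apply ris_mem cs K ω.reverse (by simpa using h)
  rw [cs.rightInvSeq_reverse]
  simpa using ht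

end Exchange

/-! ### The geometric representation -/

section Geometric

/-- The (doubled) coefficients of the standard bilinear form. -/
noncomputable def coef (M : CoxeterMatrix B) (i j : B) : ℝ := -2 * Real.cos (Real.pi / M i j)

theorem coef_self (M : CoxeterMatrix B) (i : B) : coef M i i = 2 := by
  simp [coef]

theorem coef_symm (M : CoxeterMatrix B) (i j : B) : coef M i j = coef M j i := by
  simp [coef, M.symmetric i j]

theorem M_cases (M : CoxeterMatrix B) {i j : B} (h : i ≠ j) :
    M i j = 0 ∨ M i j = 2 ∨ 3 ≤ M i j := by
  have := M.off_diagonal i j h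
  omega

theorem coef_neg (M : CoxeterMatrix B) {i j : B} (h : i ≠ j) (h2 : M i j ≠ 2) :
    coef M i j < 0 := by
  rcases M_cases M h with h0 | h0 | h0
  · simp [coef, h0]
  · exact absurd h0 h2
  · have h3 : (3 : ℝ) ≤ M i j := by exact_mod_cast h0
    have : 0 < Real.cos (Real.pi / M i j) := by
      apply Real.cos_pos_of_mem_Ioo
      constructor
      · have : 0 < Real.pi / M i j := by positivity
        linarith [Real.pi_pos]
      · apply div_lt_div_of_pos_left Real.pi_pos <;> linarith
    unfold coef
    linarith

theorem coef_nonpos (M : CoxeterMatrix B) {i j : B} (h : i ≠ j) : coef M i j ≤ 0 := by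
  by_cases h2 : M i j = 2
  · simp [coef, h2]
  · exact (coef_neg M h h2).le

variable [Fintype B] [DecidableEq B]

/-- The linear functional defining the `i`-th reflection. -/
noncomputable def fn (M : CoxeterMatrix B) (i : B) : Dual ℝ (B → ℝ) :=
  ∑ j, coef M i j • LinearMap.proj j

theorem fn_apply (M : CoxeterMatrix B) (i : B) (z : B → ℝ) :
    fn M i z = ∑ j, coef M i j * z j := by
  simp [fn]

theorem fn_single (M : CoxeterMatrix B) (i j : B) :
    fn M i (Pi.single j 1) = coef M i j := by
  simp [fn_apply, Pi.single_apply]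

theorem fn_self (M : CoxeterMatrix B) (i : B) : fn M i (Pi.single i 1) = 2 := by
  rw [fn_single, coef_self]

theorem S_facts (m : ℕ) (hm : 3 ≤ m) (t : ℝ) (ht : t = 2 * Real.cos (2 * Real.pi / m)) :
    (S ℝ (((m : ℤ) - 2) / 2)).eval t * ((S ℝ (((m : ℤ) - 1) / 2)).eval t +
      (S ℝ (((m : ℤ) - 3) / 2)).eval t) = 0 ∧
    (S ℝ (((m : ℤ) - 1) / 2)).eval t * ((S ℝ ((m : ℤ) / 2)).eval t +
      (S ℝ (((m : ℤ) - 2) / 2)).eval t) = 0 := by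
  have h3 : (3 : ℝ) ≤ m := by exact_mod_cast hm
  set θ := 2 * Real.pi / m with hθ
  have hmθ : (m : ℝ) * θ = 2 * Real.pi := by rw [hθ]; field_simp
  have hs : 0 < Real.sin θ := by
    apply Real.sin_pos_of_pos_of_lt_pi
    · have := Real.pi_pos
      positivity
    · rw [hθ, div_lt_iff₀ (by linarith)]
      nlinarith [Real.pi_pos]
  have hS (k : ℤ) : (S ℝ k).eval t * Real.sin θ = Real.sin ((k + 1) * θ) := by
    rw [ht]; exact S_two_mul_real_cos θ k
  rcases Nat.even_or_odd' m with ⟨k, hk | hk⟩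
  · have e1 : ((m : ℤ) - 2) / 2 = k - 1 := by omega
    have e2 : ((m : ℤ) - 1) / 2 = k - 1 := by omega
    have : (S ℝ ((k : ℤ) - 1)).eval t = 0 := by
      have h := hS (k - 1)
      have : (((k - 1 : ℤ) : ℝ) + 1) * θ = Real.pi := by
        rw [hk] at hmθ
        push_cast at hmθ ⊢
        linarith
      rw [this, Real.sin_pi] at h
      exact (mul_eq_zero.1 h).resolve_right hs.ne'
    rw [e1, e2, this]
    simp
  · have e1 : ((m : ℤ) - 2) / 2 = k - 1 := by omega
    have e2 : ((m : ℤ) - 1) / 2 = k := by omega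
    have e3 : ((m : ℤ) - 3) / 2 = k - 1 := by omega
    have e4 : (m : ℤ) / 2 = k := by omega
    have : (S ℝ (k : ℤ)).eval t + (S ℝ ((k : ℤ) - 1)).eval t = 0 := by
      have h1 := hS (k - 1)
      have h2 := hS k
      have : (((k : ℤ) : ℝ) + 1) * θ = 2 * Real.pi - (((k - 1 : ℤ) : ℝ) + 1) * θ := by
        rw [hk] at hmθ
        push_cast at hmθ ⊢
        linarith
      rw [this, Real.sin_two_pi_sub] at h2
      have : ((S ℝ (k : ℤ)).eval t + (S ℝ ((k : ℤ) - 1)).eval t) * Real.sin θ = 0 := by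
        rw [add_mul, h1, h2]; ring
      exact (mul_eq_zero.1 this).resolve_right hs.ne'
    rw [e1, e2, e3, e4, this]
    simp

theorem refl_liftable (M : CoxeterMatrix B) :
    M.IsLiftable (fun i => reflection (fn_self M i) : B → ((B → ℝ) ≃ₗ[ℝ] (B → ℝ))) := by
  intro i j
  by_cases hij : i = j
  · subst hij
    simp only [CoxeterMatrix.diagonal, pow_one]
    exact LinearEquiv.ext (fun z => involutive_reflection (fn_self M i) z)
  apply LinearEquiv.ext
  intro z
  rcases M_cases M hij with h0 | h0 | h0
  · simp [h0]
  · have e1 : coef M i j = 0 := by simp [coef, h0]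
    have e2 : coef M j i = 0 := by rw [coef_symm, e1]
    rw [h0, pow_two]
    simp only [LinearEquiv.mul_apply, reflection_apply, map_sub, map_smul, fn_single, coef_self,
      e1, e2, LinearEquiv.coe_one, id]
    module
  · have ht : (2 * Real.cos (2 * Real.pi / M i j) : ℝ) =
        fn M i (Pi.single j 1) * fn M j (Pi.single i 1) - 2 := by
      rw [fn_single, fn_single, coef_symm M j i, coef, mul_div_assoc, Real.cos_two_mul]
      ring
    obtain ⟨h1, h2⟩ := S_facts (M i j) h0 _ rfl
    rw [reflection_mul_reflection_pow_apply (fn_self M i) (fn_self M j) (M i j) z _ ht, h1, h2]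
    simp

/-- The geometric representation. -/
noncomputable def rho (cs : CoxeterSystem M W) : W →* ((B → ℝ) ≃ₗ[ℝ] (B → ℝ)) :=
  cs.lift ⟨_, refl_liftable M⟩

theorem rho_simple (cs : CoxeterSystem M W) (i : B) (z : B → ℝ) :
    rho cs (cs.simple i) z = z - fn M i z • Pi.single i 1 := by
  rw [rho, cs.lift_apply_simple, reflection_apply]

theorem rho_fix (cs : CoxeterSystem M W) (K : Set B) (j : B) (hj : j ∉ K) (w : W)
    (hw : w ∈ Subgroup.closure (cs.simple '' K)) (z : B → ℝ) : rho cs w z j = z j := by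
  induction hw using Subgroup.closure_induction generalizing z with
  | mem x hx =>
    obtain ⟨i, hi, rfl⟩ := hx
    have : j ≠ i := fun h => hj (h ▸ hi)
    simp [rho_simple, this]
  | one => simp
  | mul x y _ _ hx hy => rw [map_mul, LinearEquiv.mul_apply, hx, hy]
  | inv x _ hx =>
    rw [← hx (rho cs x⁻¹ z), ← LinearEquiv.mul_apply, ← map_mul]
    simp

theorem rho_simple_self (cs : CoxeterSystem M W) (i : B) :
    rho cs (cs.simple i) (Pi.single i 1) = -Pi.single i 1 := by
  rw [rho_simple, fn_self]; module

theorem simple_notMem (cs : CoxeterSystem M W) (K : Set B) (j : B) (hj : j ∉ K) :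
    cs.simple j ∉ Subgroup.closure (cs.simple '' K) := by
  intro h
  have := rho_fix cs K j hj _ h (Pi.single j 1)
  rw [rho_simple_self] at this
  simp at this
  linarith

theorem letters_mem (cs : CoxeterSystem M W) (K : Set B) (l : List B) (hl : l.Nodup)
    (h : cs.wordProd l ∈ Subgroup.closure (cs.simple '' K)) : ∀ i ∈ l, i ∈ K := by
  induction l using List.reverseRecOn with
  | nil => simp
  | append_singleton l a ih =>
    rw [cs.wordProd_append, cs.wordProd_singleton] at h
    have hn : l.Nodup ∧ a ∉ l := by
      rw [List.nodup_append] at hl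
      refine ⟨hl.1, fun ha => hl.2.2 a ha a (by simp) rfl⟩
    have haK : a ∈ K := by
      by_contra ha
      have h1 := rho_fix cs K a ha _ h (Pi.single a 1)
      have h2 := rho_fix cs {i | i ∈ l} a hn.2 _ (wordProd_mem cs _ l (fun i hi => hi))
        (-Pi.single a 1)
      rw [map_mul, LinearEquiv.mul_apply, rho_simple_self, h2] at h1
      simp at h1
      linarith
    intro i hi
    rcases List.mem_append.1 hi with hi | hi
    · refine ih hn.1 ?_ i hi
      have := mul_mem h (Subgroup.subset_closure (Set.mem_image_of_mem cs.simple haK))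
      simpa using this
    · rw [List.mem_singleton.1 hi]; exact haK

/-- The invariants of the inductive construction. -/
structure Good (cs : CoxeterSystem M W) (J : Set B) (s : B) (l : List B) : Prop where
  nodup : (s :: l).Nodup
  sub : ∀ i ∈ s :: l, i ∈ J
  red : cs.IsReduced (l ++ s :: l.reverse)
  pos : ∀ i ∈ s :: l, 0 < rho cs (cs.wordProd l) (Pi.single s 1) i
  zero : ∀ i, i ∉ s :: l → rho cs (cs.wordProd l) (Pi.single s 1) i = 0

theorem good_nil (cs : CoxeterSystem M W) (J : Set B) (s : B) (hs : s ∈ J) :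
    Good cs J s [] where
  nodup := by simp
  sub := by simpa using hs
  red := by simp [CoxeterSystem.IsReduced]
  pos := by simp
  zero := by
    intro i hi
    simp at hi
    simp [hi]

theorem good_cons (cs : CoxeterSystem M W) (J : Set B) (s : B) (l : List B)
    (hl : Good cs J s l) (j k : B) (hj : j ∈ J) (hjl : j ∉ s :: l) (hk : k ∈ s :: l)
    (hc : ¬ Commute (cs.simple k) (cs.simple j)) : Good cs J s (j :: l) := by
  set β := rho cs (cs.wordProd l) (Pi.single s 1) with hβ
  set c := fn M j β with hcdef
  have hcneg : c < 0 := by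
    rw [hcdef, fn_apply]
    apply Finset.sum_neg'
    · intro i _
      by_cases hi : i ∈ s :: l
      · exact mul_nonpos_of_nonpos_of_nonneg
          (coef_nonpos M (fun h => hjl (h ▸ hi))) (hl.pos i hi).le
      · rw [hβ, hl.zero i hi]; simp
    · refine ⟨k, Finset.mem_univ _, ?_⟩
      refine mul_neg_of_neg_of_pos (coef_neg M (fun h => hjl (h ▸ hk)) ?_) (hl.pos k hk)
      intro h2
      apply hc
      have h := cs.simple_mul_simple_pow j k
      rw [h2, pow_two] at h
      have := eq_inv_of_mul_eq_one_left h
      rw [mul_inv_rev, cs.inv_simple, cs.inv_simple] at this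
      exact this.symm
  have hβ' : rho cs (cs.wordProd (j :: l)) (Pi.single s 1) = β - c • Pi.single j 1 := by
    rw [cs.wordProd_cons, map_mul, LinearEquiv.mul_apply, ← hβ, rho_simple]
  set ω := l ++ s :: l.reverse with hω
  have hωK : ∀ i ∈ ω, i ∈ {i | i ∈ s :: l} := by
    intro i hi
    simp [hω] at hi ⊢
    tauto
  have hωt : cs.wordProd ω = cs.wordProd l * cs.simple s * (cs.wordProd l)⁻¹ := by
    simp [hω, cs.wordProd_append, cs.wordProd_cons, mul_assoc]
  have htmem := wordProd_mem cs _ ω hωK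
  have hjmem := simple_notMem cs {i | i ∈ s :: l} j hjl
  set t := cs.wordProd ω with ht
  have hncomm : cs.simple j * t ≠ t * cs.simple j := by
    intro hcm
    have h1 : rho cs t β = -β := by
      rw [hωt, hβ, ← LinearEquiv.mul_apply, ← map_mul, inv_mul_cancel_right, map_mul,
        LinearEquiv.mul_apply, rho_simple_self, map_neg]
    have h2 : rho cs (cs.simple j * t) β = rho cs (t * cs.simple j) β := by rw [hcm]
    rw [map_mul, map_mul, LinearEquiv.mul_apply, LinearEquiv.mul_apply, h1, map_neg,
      rho_simple, map_sub, h1, map_smul] at h2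
    have h3 := congrFun h2 j
    simp [rho_fix cs _ j hjl t htmem, ← hcdef] at h3
    linarith
  have hr1 : cs.length (t * cs.simple j) = cs.length t + 1 := by
    rcases cs.length_mul_simple t j with h | h
    · exact h
    · exact absurd (ris_mem cs _ ω hωK _
        (strong_exchange cs ω (cs.isReflection_simple j) (by rw [← ht]; omega))) hjmem
  have hr2 : cs.length (cs.simple j * (t * cs.simple j)) = cs.length (t * cs.simple j) + 1 := by
    rcases cs.length_simple_mul (t * cs.simple j) j with h | h
    · exact h
    · exfalso
      have h' := strong_exchange_left cs (ω.concat j) (cs.isReflection_simple j) (by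
        rw [cs.wordProd_concat, ← ht]; omega)
      rw [cs.leftInvSeq_concat, List.concat_eq_append, List.mem_append, List.mem_singleton] at h'
      rcases h' with h' | h'
      · exact hjmem (lis_mem cs _ ω hωK _ h')
      · rw [← ht] at h'
        exact hncomm (mul_inv_eq_iff_eq_mul.1 h'.symm).symm
  refine ⟨?_, ?_, ?_, ?_, ?_⟩
  · have := hl.nodup
    simp at this hjl ⊢
    exact ⟨⟨fun h => hjl.1 h.symm, this.1⟩, hjl.2, this.2⟩
  · intro i hi
    have := hl.sub i
    simp at hi this
    rcases hi with hi | rfl | hi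
    · exact this (Or.inl hi)
    · exact hj
    · exact this (Or.inr hi)
  · have hw : j :: l ++ s :: (j :: l).reverse = j :: (ω.concat j) := by simp [hω]
    have hlen := hl.red
    rw [CoxeterSystem.IsReduced, ← ht] at hlen
    rw [hw, CoxeterSystem.IsReduced, cs.wordProd_cons, cs.wordProd_concat, ← ht, hr2, hr1, hlen]
    simp [hω]
    omega
  · intro i hi
    rw [hβ']
    by_cases hij : i = j
    · subst hij
      simp [hl.zero i hjl, β, hcneg]
    · have : i ∈ s :: l := by simp at hi ⊢; tauto
      simpa [hij] using hl.pos i this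
  · intro i hi
    rw [hβ']
    have hij : i ≠ j := by rintro rfl; simp at hi
    have : i ∉ s :: l := by simp at hi ⊢; tauto
    simpa [hij] using hl.zero i this

theorem exists_good (cs : CoxeterSystem M W) (J : Set B) (hirr : IrreducibleSubset cs J)
    (s : B) (hs : s ∈ J) : ∃ l, Good cs J s l ∧ ∀ i ∈ J, i ∈ s :: l := by
  have key : ∀ n : ℕ, ∃ l, Good cs J s l ∧ (l.length = n ∨ ∀ i ∈ J, i ∈ s :: l) := by
    intro n
    induction n with
    | zero => exact ⟨[], good_nil cs J s hs, Or.inl rfl⟩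
    | succ n ih =>
      obtain ⟨l, hl, h⟩ := ih
      by_cases hall : ∀ i ∈ J, i ∈ s :: l
      · exact ⟨l, hl, Or.inr hall⟩
      have hn := h.resolve_right hall
      have hex : ∃ k ∈ s :: l, ∃ j ∈ J, j ∉ s :: l ∧ ¬ Commute (cs.simple k) (cs.simple j) := by
        by_contra hcon
        push Not at hcon hall
        apply hirr
        refine ⟨{i | i ∈ s :: l}, J \ {i | i ∈ s :: l}, ⟨s, by simp⟩, ?_,
          Set.disjoint_sdiff_right, Set.union_sdiff_cancel hl.sub, ?_⟩
        · obtain ⟨i, hi, hi'⟩ := hall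
          exact ⟨i, hi, hi'⟩
        · intro k hk j hj
          exact hcon k hk j hj.1 hj.2
      obtain ⟨k, hk, j, hj, hjl, hc⟩ := hex
      exact ⟨j :: l, good_cons cs J s l hl j k hj hjl hk hc, Or.inl (by simp [hn])⟩
  obtain ⟨l, hl, h | h⟩ := key (Fintype.card B)
  · have := hl.nodup.length_le_card
    simp [h] at this
  · exact ⟨l, hl, h⟩

end Geometric

end SimpleBase

/-- For every irreducible spherical subset `J` and every `s ∈ J` there is a
simple base with core `s` and support `J`. -/
theorem exists_simple_base
    [Finite B] (cs : CoxeterSystem M W) (J : Set B)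
    (hirr : IrreducibleSubset cs J) (hsph : Spherical cs J)
    (s : B) (hs : s ∈ J) :
    ∃ w : W, IsSimpleBase cs s w ∧ IsSupport cs s w J := by
  classical
  have := Fintype.ofFinite B
  obtain ⟨l, hl, hall⟩ := SimpleBase.exists_good cs J hirr s hs
  have hnd := hl.nodup
  rw [List.nodup_cons] at hnd
  have hlJ : ∀ i ∈ l.reverse, i ∈ J := fun i hi => hl.sub i (by simp at hi ⊢; exact Or.inr hi)
  have hred := hl.red
  have hw1 : cs.length ((cs.wordProd l.reverse)⁻¹ * cs.simple s * cs.wordProd l.reverse)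
      = 2 * l.length + 1 := by
    rw [CoxeterSystem.IsReduced, cs.wordProd_append, cs.wordProd_cons] at hred
    have e : (cs.wordProd l.reverse)⁻¹ = cs.wordProd l := by simp
    rw [e, mul_assoc, hred]
    simp
    ring
  have hw2 : cs.length (cs.wordProd l.reverse) = l.length := by
    have h1 := cs.length_wordProd_le l.reverse
    have h2 := cs.length_mul_le ((cs.wordProd l.reverse)⁻¹ * cs.simple s) (cs.wordProd l.reverse)
    have h3 := cs.length_mul_le (cs.wordProd l.reverse)⁻¹ (cs.simple s)
    rw [cs.length_inv, cs.length_simple] at h3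
    rw [List.length_reverse] at h1
    omega
  refine ⟨cs.wordProd l.reverse, ⟨⟨by rw [hw1, hw2], ?_⟩, l.reverse, rfl, by simpa using hw2,
    by simpa using hnd.2, by simpa using hnd.1⟩, hs, SimpleBase.wordProd_mem cs J _ hlJ, ?_⟩
  · intro t ht hlt
    have htJ := SimpleBase.lis_mem cs J _ hlJ t
      (SimpleBase.strong_exchange_left cs l.reverse ht hlt)
    refine Set.Finite.subset hsph ?_
    have : Subgroup.closure {cs.simple s, t} ≤ Subgroup.closure (cs.simple '' J) := by
      rw [Subgroup.closure_le]
      intro x hx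
      rcases hx with rfl | rfl
      · exact Subgroup.subset_closure ⟨s, hs, rfl⟩
      · exact htJ
    exact this
  · intro J' hs' hw i hi
    have := SimpleBase.letters_mem cs J' l.reverse (by simpa using hnd.2) hw
    rcases List.mem_cons.1 (hall i hi) with rfl | h
    · exact hs'
    · exact this i (by simpa using h)
end

section
/- Let (W,S) be a Coxeter system with S finite. If (s,w) and (s,w') are two simple bases with the same core s and the same support, then w = w'. -/
variable {B : Type*} {W : Type*} [Group W] {M : CoxeterMatrix B}

namespace SBU

open Module Polynomial.Chebyshev

/-- Twice the Coxeter form matrix. -/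
noncomputable def cmat {B : Type*} (M : CoxeterMatrix B) : Matrix B B ℝ :=
  fun i j => -2 * Real.cos (Real.pi / (M i j : ℝ))

theorem cmat_symm {B : Type*} (M : CoxeterMatrix B) (i j : B) : cmat M i j = cmat M j i := by
  simp [cmat, M.symmetric i j]

theorem cmat_diag {B : Type*} (M : CoxeterMatrix B) (i : B) : cmat M i i = 2 := by
  simp [cmat]

theorem three_le {B : Type*} (M : CoxeterMatrix B) {i j : B} (h : i ≠ j) (h0 : M i j ≠ 0)
    (h2 : M i j ≠ 2) : 3 ≤ M i j := by
  have := M.off_diagonal i j h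
  omega

theorem cmat_le_neg_one {B : Type*} (M : CoxeterMatrix B) {i j : B} (h : i ≠ j)
    (h2 : M i j ≠ 2) : cmat M i j ≤ -1 := by
  unfold cmat
  by_cases h0 : M i j = 0
  · simp [h0]
  · have h3 : (3 : ℝ) ≤ M i j := by exact_mod_cast three_le M h h0 h2
    have : Real.cos (Real.pi / 3) ≤ Real.cos (Real.pi / (M i j : ℝ)) := by
      apply Real.cos_le_cos_of_nonneg_of_le_pi
      · positivity
      · have := Real.pi_pos
        linarith
      · have := Real.pi_pos
        gcongr
    rw [Real.cos_pi_div_three] at this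
    linarith

theorem cmat_two {B : Type*} (M : CoxeterMatrix B) {i j : B} (h2 : M i j = 2) :
    cmat M i j = 0 := by
  simp [cmat, h2]

theorem cmat_nonpos {B : Type*} (M : CoxeterMatrix B) {i j : B} (h : i ≠ j) :
    cmat M i j ≤ 0 := by
  by_cases h2 : M i j = 2
  · exact (cmat_two M h2).le
  · linarith [cmat_le_neg_one M h h2]

section

variable {B : Type*} [Fintype B] [DecidableEq B] (M : CoxeterMatrix B)

/-- Twice the Coxeter bilinear form. -/
noncomputable def bil : (B → ℝ) →ₗ[ℝ] (B → ℝ) →ₗ[ℝ] ℝ := Matrix.toLinearMap₂' ℝ (cmat M)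

/-- simple root -/
def rt (i : B) : B → ℝ := Pi.single i 1

theorem bil_apply (u v : B → ℝ) : bil M u v = ∑ i, ∑ j, u i * v j * cmat M i j := by
  simp [bil, Matrix.toLinearMap₂'_apply, mul_assoc]

theorem bil_symm (u v : B → ℝ) : bil M u v = bil M v u := by
  rw [bil_apply, bil_apply, Finset.sum_comm]
  refine Finset.sum_congr rfl fun i _ => Finset.sum_congr rfl fun j _ => ?_
  rw [cmat_symm]; ring

theorem bil_rt (i j : B) : bil M (rt i) (rt j) = cmat M i j := by
  rw [bil_apply, Finset.sum_eq_single i, Finset.sum_eq_single j]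
  · simp [rt]
  · intro b _ hb; simp [rt, hb]
  · simp
  · intro b _ hb; simp [rt, hb]
  · simp

theorem bil_rt_left (i : B) (v : B → ℝ) : bil M (rt i) v = ∑ j, v j * cmat M i j := by
  rw [bil_apply, Finset.sum_eq_single i]
  · simp [rt]
  · intro b _ hb; simp [rt, hb]
  · simp

theorem bil_self (i : B) : bil M (rt i) (rt i) = 2 := by rw [bil_rt, cmat_diag]

/-- simple reflection -/
noncomputable def rf (i : B) : (B → ℝ) ≃ₗ[ℝ] (B → ℝ) := reflection (bil_self M i)

theorem rf_apply (i : B) (v : B → ℝ) : rf M i v = v - bil M (rt i) v • rt i := by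
  rw [rf, reflection_apply]

theorem rf_liftable : M.IsLiftable (rf M) := by
  intro i j
  by_cases hij : i = j
  · subst hij
    rw [M.diagonal, pow_one]
    ext1 v
    exact involutive_reflection (bil_self M i) v
  by_cases h0 : M i j = 0
  · rw [h0, pow_zero]
  by_cases h2 : M i j = 2
  · have hz := cmat_two M h2
    have hz' : cmat M j i = 0 := by rw [cmat_symm, hz]
    ext1 v
    rw [h2, pow_two]
    simp only [LinearEquiv.mul_apply, rf_apply, map_sub, map_smul, bil_rt, hz, hz', cmat_diag,
      smul_eq_mul, LinearEquiv.coe_one, id]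
    module
  have h3 := three_le M hij h0 h2
  set m := M i j with hm
  set θ : ℝ := Real.pi / m with hθ
  have hm0 : (m : ℝ) ≠ 0 := by exact_mod_cast h0
  have hmθ : m * θ = Real.pi := by rw [hθ]; field_simp
  have hs : Real.sin (2 * θ) ≠ 0 := by
    have hp := Real.pi_pos
    have h3' : (3 : ℝ) ≤ m := by exact_mod_cast h3
    have hθ0 : 0 < θ := by positivity
    apply ne_of_gt
    apply Real.sin_pos_of_pos_of_lt_pi
    · positivity
    · nlinarith
  have ht : 2 * Real.cos (2 * θ) = bil M (rt i) (rt j) * bil M (rt j) (rt i) - 2 := by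
    rw [bil_rt, bil_rt, cmat_symm M j i, Real.cos_two_mul]
    simp only [cmat]
    rw [← hm, ← hθ]; ring
  have hS (n : ℤ) := S_two_mul_real_cos (2 * θ) n
  ext1 v
  rw [rf, rf, reflection_mul_reflection_pow_apply (bil_self M i) (bil_self M j) m v _ ht]
  rcases Nat.even_or_odd' m with ⟨k, hk | hk⟩
  · have e1 : ((m : ℤ) - 2) / 2 = k - 1 := by omega
    have e2 : ((m : ℤ) - 1) / 2 = k - 1 := by omega
    have z : (S ℝ ((k : ℤ) - 1)).eval (2 * Real.cos (2 * θ)) = 0 := by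
      have := hS (k - 1)
      have e : (((k : ℤ) - 1 : ℤ) + 1 : ℝ) * (2 * θ) = Real.pi := by
        rw [← hmθ, hk]; push_cast; ring
      rw [e, Real.sin_pi] at this
      exact (mul_eq_zero.1 this).resolve_right hs
    rw [e1, e2, z]
    simp
  · have e1 : ((m : ℤ) - 2) / 2 = k - 1 := by omega
    have e2 : ((m : ℤ) - 1) / 2 = k := by omega
    have e3 : ((m : ℤ) - 3) / 2 = k - 1 := by omega
    have e4 : (m : ℤ) / 2 = k := by omega
    have z : (S ℝ (k : ℤ)).eval (2 * Real.cos (2 * θ)) +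
        (S ℝ ((k : ℤ) - 1)).eval (2 * Real.cos (2 * θ)) = 0 := by
      have h1 := hS (k - 1)
      have h2 := hS k
      have e : (((k : ℤ) - 1 : ℤ) + 1 : ℝ) * (2 * θ) = Real.pi - θ := by
        rw [← hmθ, hk]; push_cast; ring
      have e' : (((k : ℤ) : ℝ) + 1 : ℝ) * (2 * θ) = θ + Real.pi := by
        rw [← hmθ, hk]; push_cast; ring
      rw [e, Real.sin_pi_sub] at h1
      rw [e', Real.sin_add_pi] at h2
      have : ((S ℝ (k : ℤ)).eval (2 * Real.cos (2 * θ)) +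
        (S ℝ ((k : ℤ) - 1)).eval (2 * Real.cos (2 * θ))) * Real.sin (2 * θ) = 0 := by
        rw [add_mul, h1, h2]; ring
      exact (mul_eq_zero.1 this).resolve_right hs
    rw [e1, e2, e3, e4, z]
    simp

end

section

variable {B : Type*} [Fintype B] [DecidableEq B] {M : CoxeterMatrix B} {W : Type*} [Group W]
  (cs : CoxeterSystem M W)

/-- The geometric representation. -/
noncomputable def rho : W →* ((B → ℝ) ≃ₗ[ℝ] (B → ℝ)) := cs.lift ⟨rf M, rf_liftable M⟩

theorem rho_simple (i : B) : rho cs (cs.simple i) = rf M i := cs.lift_apply_simple _ i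

theorem rho_cons (i : B) (l : List B) (v : B → ℝ) :
    rho cs (cs.wordProd (i :: l)) v = rf M i (rho cs (cs.wordProd l) v) := by
  rw [cs.wordProd_cons, map_mul, rho_simple]; rfl

theorem rf_coord {i s : B} (h : s ≠ i) (v : B → ℝ) : rf M i v s = v s := by
  simp [rf_apply, rt, h]

theorem rho_coord {s : B} (l : List B) (h : s ∉ l) (v : B → ℝ) :
    rho cs (cs.wordProd l) v s = v s := by
  induction l with
  | nil => simp
  | cons i l ih =>
    simp only [List.mem_cons, not_or] at h
    rw [rho_cons, rf_coord h.1, ih h.2]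

theorem bil_rf (i : B) (u v : B → ℝ) : bil M u (rf M i v) = bil M (rf M i u) v := by
  simp only [rf_apply, map_sub, map_smul, LinearMap.sub_apply, LinearMap.smul_apply, smul_eq_mul]
  rw [bil_symm M u (rt i)]; ring

theorem bil_rho (l : List B) (u v : B → ℝ) :
    bil M u (rho cs (cs.wordProd l) v) = bil M (rho cs (cs.wordProd l)⁻¹ u) v := by
  induction l generalizing u with
  | nil => simp
  | cons i l ih =>
    rw [rho_cons, bil_rf, ih, cs.wordProd_cons, mul_inv_rev, map_mul, cs.inv_simple, rho_simple]
    rfl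

/-- closure elements fix coordinates outside. -/
theorem closure_coord {J : Set B} {k : B} (hk : k ∉ J) {w : W}
    (hw : w ∈ Subgroup.closure (cs.simple '' J)) (v : B → ℝ) : rho cs w v k = v k := by
  induction hw using Subgroup.closure_induction generalizing v with
  | mem x hx =>
    obtain ⟨j, hj, rfl⟩ := hx
    rw [rho_simple, rf_coord]
    rintro rfl; exact hk hj
  | one => simp
  | mul x y _ _ hx hy => rw [map_mul, LinearEquiv.mul_apply, hx, hy]
  | inv x _ hx =>
    have := hx (rho cs x⁻¹ v)
    rw [← this, ← LinearEquiv.mul_apply, ← map_mul]; simp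

theorem mem_of_mem_closure {J : Set B} {k : B} {l : List B} (hl : l.Nodup) (hk : k ∈ l)
    (hw : cs.wordProd l ∈ Subgroup.closure (cs.simple '' J)) : k ∈ J := by
  by_contra hkJ
  obtain ⟨p, q, rfl⟩ := List.append_of_mem hk
  have hp : k ∉ p := by intro h; have := List.nodup_append.1 hl; grind
  have hq : k ∉ q := by
    intro h; have := List.nodup_append.1 hl; grind
  have := closure_coord cs hkJ hw (rho cs (cs.wordProd q)⁻¹ (rt k))
  rw [cs.wordProd_append, map_mul, LinearEquiv.mul_apply, rho_coord cs p hp, rho_cons,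
    ← LinearEquiv.mul_apply (rho cs (cs.wordProd q)), ← map_mul, ← cs.wordProd_reverse,
    rho_coord cs q.reverse (by simpa using hq)] at this
  rw [cs.wordProd_reverse, mul_inv_cancel, map_one, LinearEquiv.coe_one, id, rf_apply,
    bil_self] at this
  simp [rt] at this

/-- every letter has an earlier neighbour -/
def EE (M : CoxeterMatrix B) (s : B) (l : List B) : Prop :=
  ∀ p k q, l = p ++ k :: q → ∃ x ∈ s :: p, M x k ≠ 2

/-- at most one earlier neighbour -/
def UU (M : CoxeterMatrix B) (s : B) (l : List B) : Prop :=
  ∀ p k q, l = p ++ k :: q → ∀ x ∈ s :: p, ∀ y ∈ s :: p, M x k ≠ 2 → M y k ≠ 2 → x = y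

theorem comm_of_two {i j : B} (h : M i j = 2) : Commute (cs.simple i) (cs.simple j) := by
  have := cs.simple_mul_simple_pow i j
  rw [h, pow_two] at this
  have h2 := eq_inv_of_mul_eq_one_left this
  rw [mul_inv_rev, cs.inv_simple, cs.inv_simple] at h2
  exact h2

theorem comm_word {k : B} {l : List B} (h : ∀ x ∈ l, M x k = 2) :
    Commute (cs.wordProd l) (cs.simple k) := by
  induction l with
  | nil => simp
  | cons i l ih =>
    rw [cs.wordProd_cons]
    exact (comm_of_two cs (h i (by simp))).mul_left (ih fun x hx => h x (by simp [hx]))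

theorem main_comb (s : B) (l : List B) : ∀ l' : List B, l.Nodup → s ∉ l → l.Perm l' →
    UU M s l → EE M s l' → cs.wordProd l = cs.wordProd l' := by
  induction l using List.reverseRecOn with
  | nil => intro l' _ _ hp _ _; rw [hp.nil_eq]
  | append_singleton p k ih =>
    intro l' hn hs hp hU hE
    have hk : k ∈ l' := hp.subset (by simp)
    obtain ⟨p', q', rfl⟩ := List.append_of_mem hk
    have hn' := hp.nodup hn
    have hpp : p.Perm (p' ++ q') := by
      have h1 : (p ++ [k]).Perm (k :: p) := List.perm_append_singleton k p
      have h2 : (p' ++ k :: q').Perm (k :: (p' ++ q')) := List.perm_middle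
      exact (List.perm_cons k).1 (h1.symm.trans (hp.trans h2))
    have hq : ∀ y ∈ q', M y k = 2 := by
      intro y hy
      by_contra hyk
      obtain ⟨x, hx, hxk⟩ := hE p' k q' rfl
      have hx' : x ∈ s :: p := by
        rcases List.mem_cons.1 hx with rfl | hx
        · simp
        · exact List.mem_cons_of_mem _ (hpp.symm.subset (by simp [hx]))
      have hyp : y ∈ p := hpp.symm.subset (by simp [hy])
      have := hU p k [] rfl x hx' y (by simp [hyp]) hxk hyk
      subst this
      rcases List.mem_cons.1 hx with rfl | hx
      · exact hs (by simp [hyp])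
      · have := List.nodup_append.1 hn'
        grind
    have key : cs.wordProd p = cs.wordProd (p' ++ q') := by
      apply ih _ (List.nodup_append.1 hn).1 (fun h => hs (by simp [h])) hpp
      · intro a b c h x hx y hy
        exact hU a b (c ++ [k]) (by simp [h]) x hx y hy
      · intro a b c h
        rcases List.append_eq_append_iff.1 h with ⟨d, rfl, hd⟩ | ⟨d, rfl, hd⟩
        · obtain ⟨x, hx, hxb⟩ := hE (p' ++ k :: d) b c (by simp [hd])
          refine ⟨x, ?_, hxb⟩
          have hxk : x ≠ k := by
            rintro rfl
            apply hxb
            rw [M.symmetric x b]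
            exact hq b (by simp [hd])
          simp at hx ⊢
          tauto
        · cases d with
          | nil =>
            simp at hd
            subst hd
            obtain ⟨x, hx, hxb⟩ := hE (a ++ [k]) b c (by simp)
            refine ⟨x, ?_, hxb⟩
            have hxk : x ≠ k := by
              rintro rfl
              apply hxb
              rw [M.symmetric x b]
              exact hq b (by simp)
            simp at hx ⊢
            tauto
          | cons e d =>
            simp at hd
            obtain ⟨rfl, rfl⟩ := hd
            exact hE a b (d ++ k :: q') (by simp)
    rw [cs.wordProd_append, key, cs.wordProd_singleton, cs.wordProd_append, cs.wordProd_append, cs.wordProd_cons,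
      mul_assoc, (comm_word cs hq).eq]

theorem EE_of_base {s : B} {l : List B}
    (h : cs.length ((cs.wordProd l)⁻¹ * cs.simple s * cs.wordProd l) = 2 * l.length + 1) :
    EE M s l := by
  rintro p k q rfl
  by_contra! hc
  have h1 := comm_word cs (l := p) (k := k) (fun x hx => hc x (by simp [hx]))
  have h2 := comm_of_two cs (hc s (by simp))
  have e : (cs.wordProd (p ++ k :: q))⁻¹ * cs.simple s * cs.wordProd (p ++ k :: q) =
      cs.wordProd (q.reverse ++ p.reverse ++ s :: p ++ q) := by
    simp only [cs.wordProd_append, cs.wordProd_cons, cs.wordProd_reverse, mul_inv_rev,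
      cs.inv_simple, mul_assoc]
    congr 1
    have h3 : cs.simple k * ((cs.wordProd p)⁻¹ * (cs.simple s * cs.wordProd p)) =
      ((cs.wordProd p)⁻¹ * (cs.simple s * cs.wordProd p)) * cs.simple k :=
      (((h1.inv_left).mul_left (h2.mul_left h1)).eq).symm
    have := congrArg (· * (cs.simple k * cs.wordProd q)) h3
    simpa [mul_assoc] using this
  have := cs.length_wordProd_le (q.reverse ++ p.reverse ++ s :: p ++ q)
  rw [← e, h] at this
  simp at this
  omega

theorem gamma_bound {s : B} (l : List B) (hn : l.Nodup) (hs : s ∉ l) (hE : EE M s l) :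
    (∀ x ∈ s :: l, 1 ≤ rho cs (cs.wordProd l)⁻¹ (rt s) x) ∧
    (∀ x, x ∉ s :: l → rho cs (cs.wordProd l)⁻¹ (rt s) x = 0) := by
  induction l using List.reverseRecOn with
  | nil => constructor <;> intro x hx <;> simp_all [rt]
  | append_singleton p k ih =>
    have hE' : EE M s p := fun a b c h => hE a b (c ++ [k]) (by simp [h])
    obtain ⟨i1, i2⟩ := ih (List.nodup_append.1 hn).1 (fun h => hs (by simp [h])) hE'
    set g := rho cs (cs.wordProd p)⁻¹ (rt s) with hg
    have e : rho cs (cs.wordProd (p ++ [k]))⁻¹ (rt s) = rf M k g := by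
      rw [cs.wordProd_append, cs.wordProd_singleton, mul_inv_rev, cs.inv_simple, map_mul,
        rho_simple]; rfl
    have hkp : k ∉ s :: p := by
      have := List.nodup_append.1 hn
      grind
    rw [e]
    obtain ⟨x, hx, hxk⟩ := hE p k [] rfl
    have hkx : k ≠ x := by rintro rfl; exact hkp hx
    have hb : bil M (rt k) g ≤ -1 := by
      rw [bil_rt_left]
      have hle : ∀ j ∈ Finset.univ, g j * cmat M k j ≤ if j = x then -1 else 0 := by
        intro j _
        by_cases hj : j ∈ s :: p
        · have hkj : k ≠ j := by rintro rfl; exact hkp hj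
          have := i1 j hj
          have h0 := cmat_nonpos M hkj
          split_ifs with hjx
          · subst hjx
            have := cmat_le_neg_one M hkj (by rw [M.symmetric k j]; exact hxk)
            nlinarith
          · nlinarith
        · rw [i2 j hj, if_neg (by rintro rfl; exact hj hx)]; simp
      refine (Finset.sum_le_sum hle).trans ?_
      simp
    constructor
    · intro y hy
      by_cases hyk : y = k
      · subst hyk
        rw [rf_apply]
        have e2 : (rt y : B → ℝ) y = 1 := by simp [rt]
        rw [Pi.sub_apply, Pi.smul_apply, e2, i2 y hkp, smul_eq_mul]
        linarith
      · rw [rf_coord hyk]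
        exact i1 y (by simp at hy ⊢; tauto)
    · intro y hy
      have hyk : y ≠ k := by rintro rfl; simp at hy
      rw [rf_coord hyk]
      exact i2 y (by simp at hy ⊢; tauto)

theorem infinite_order {s : B} {β : B → ℝ} (hβ : β s = 0) (c : ℝ) (hc : 2 ≤ c)
    (T : (B → ℝ) ≃ₗ[ℝ] (B → ℝ)) (hT1 : T (rt s) = rt s + c • β) (hT2 : T β = - β)
    (hb : bil M (rt s) β = -c) (n : ℕ) (hn : 0 < n) : (rf M s * T) ^ n ≠ 1 := by
  have key : ∀ n : ℕ, ∃ x y : ℝ, ((rf M s * T) ^ n) (rt s) = x • rt s + y • β ∧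
      1 + n ≤ x ∧ 0 ≤ y ∧ 1 ≤ x - y := by
    intro n
    induction n with
    | zero => exact ⟨1, 0, by simp, by simp, le_rfl, by simp⟩
    | succ n ih =>
      obtain ⟨x, y, h, h1, h2, h3⟩ := ih
      have hn0 : (0 : ℝ) ≤ n := Nat.cast_nonneg n
      have a1 : x + 1 ≤ c * x - y := by nlinarith
      have a2 : (c * x - y) + 1 ≤ c * (c * x - y) - x := by nlinarith
      refine ⟨c * (c * x - y) - x, c * x - y, ?_, ?_, ?_, ?_⟩
      · rw [pow_succ', LinearEquiv.mul_apply, h, LinearEquiv.mul_apply, map_add, map_smul,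
          map_smul, hT1, hT2, rf_apply]
        simp only [map_add, map_smul, map_neg, hb, bil_self, smul_eq_mul]
        module
      · push_cast; linarith
      · linarith
      · linarith
  intro h
  obtain ⟨x, y, h1, h2, h3, h4⟩ := key n
  rw [h] at h1
  have := congrFun h1 s
  simp [rt, hβ] at this
  have : (1 : ℝ) ≤ n := by exact_mod_cast hn
  linarith

theorem UU_of_base {s : B} {l : List B} (hn : l.Nodup) (hs : s ∉ l)
    (hlen : cs.length (cs.wordProd l) = l.length)
    (hE : EE M s l)
    (hfin : ∀ t : W, cs.IsReflection t → cs.length (t * cs.wordProd l) < cs.length (cs.wordProd l) →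
      (Subgroup.closure {cs.simple s, t} : Set W).Finite) : UU M s l := by
  rintro p k q rfl x hx y hy hxk hyk
  by_contra hxy
  have hkp : k ∉ s :: p := by
    have := List.nodup_append.1 hn
    grind
  have hks : s ≠ k := by rintro rfl; simp at hkp
  have hE' : EE M s p := fun a b c h => hE a b (c ++ k :: q) (by simp [h])
  have hsp : s ∉ p := fun h => hs (by simp [h])
  obtain ⟨i1, i2⟩ := gamma_bound cs p (List.nodup_append.1 hn).1 hsp hE'
  set u := cs.wordProd p with hu
  set g := rho cs u⁻¹ (rt s) with hg
  set t : W := u * cs.simple k * u⁻¹ with ht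
  have hb : bil M (rt k) g ≤ -2 := by
    rw [bil_rt_left]
    have hle : ∀ j ∈ Finset.univ, g j * cmat M k j ≤
        (if j = x then -1 else 0) + (if j = y then -1 else 0) := by
      intro j _
      by_cases hj : j ∈ s :: p
      · have hkj : k ≠ j := by rintro rfl; exact hkp hj
        have := i1 j hj
        have h0 := cmat_nonpos M hkj
        by_cases hjx : j = x
        · subst hjx
          have := cmat_le_neg_one M hkj (by rw [M.symmetric k j]; exact hxk)
          simp [hxy]
          nlinarith
        · by_cases hjy : j = y
          · subst hjy
            have := cmat_le_neg_one M hkj (by rw [M.symmetric k j]; exact hyk)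
            simp [hjx]
            nlinarith
          · simp [hjx, hjy]
            nlinarith
      · rw [i2 j hj, if_neg (by rintro rfl; exact hj hx), if_neg (by rintro rfl; exact hj hy)]
        simp
    refine (Finset.sum_le_sum hle).trans ?_
    rw [Finset.sum_add_distrib]
    simp
    norm_num
  have hF := hfin t ⟨u, k, rfl⟩ (by
    have e : t * cs.wordProd (p ++ k :: q) = cs.wordProd (p ++ q) := by
      rw [ht, cs.wordProd_append, cs.wordProd_append, cs.wordProd_cons, ← hu]
      simp [mul_assoc]
    rw [e, hlen]
    refine (cs.length_wordProd_le _).trans_lt ?_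
    simp)
  have hmem : cs.simple s * t ∈ Subgroup.closure {cs.simple s, t} :=
    mul_mem (Subgroup.subset_closure (by simp)) (Subgroup.subset_closure (by simp))
  have hfo : IsOfFinOrder (cs.simple s * t) := by
    have : Finite (Subgroup.closure {cs.simple s, t}) := hF
    have := isOfFinOrder_of_finite (⟨_, hmem⟩ : Subgroup.closure {cs.simple s, t})
    exact Submonoid.isOfFinOrder_coe.2 this
  obtain ⟨n, hn0, hpow⟩ := isOfFinOrder_iff_pow_eq_one.1 hfo
  have hcancel : ∀ v, rho cs u (rho cs u⁻¹ v) = v := by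
    intro v
    rw [← LinearEquiv.mul_apply, ← map_mul]; simp
  have hT : ∀ v, rho cs t v = v - bil M (rt k) (rho cs u⁻¹ v) • rho cs u (rt k) := by
    intro v
    rw [ht, map_mul, map_mul, rho_simple, LinearEquiv.mul_apply, LinearEquiv.mul_apply, rf_apply,
      map_sub, map_smul, hcancel]
  have hβ : rho cs u (rt k) s = 0 := by
    rw [hu, rho_coord cs p hsp]; simp [rt, hks]
  refine infinite_order (M := M) hβ (-bil M (rt k) g) (by linarith) (rho cs t) ?_ ?_ ?_ n hn0 ?_
  · rw [hT, ← hg]; module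
  · have : rho cs u⁻¹ (rho cs u (rt k)) = rt k := by
      rw [← LinearEquiv.mul_apply, ← map_mul]; simp
    rw [hT, this, bil_self]; module
  · rw [hu, bil_rho, ← hu, ← hg, bil_symm]; simp
  · rw [← rho_simple cs, ← map_mul, ← map_pow, hpow, map_one]

theorem mem_iff_of_support {s : B} {l : List B} {J : Set B} (hn : l.Nodup) (hs : s ∉ l)
    (hJ : IsSupport cs s (cs.wordProd l) J) (k : B) : k ∈ l ↔ k ∈ J ∧ k ≠ s := by
  constructor
  · intro hk
    exact ⟨mem_of_mem_closure cs hn hk hJ.2.1, by rintro rfl; exact hs hk⟩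
  · rintro ⟨hk, hks⟩
    have := hJ.2.2 {x | x ∈ s :: l} (by simp) (by
      rw [CoxeterSystem.wordProd]
      apply Subgroup.list_prod_mem
      intro x hx
      obtain ⟨j, hj, rfl⟩ := List.mem_map.1 hx
      exact Subgroup.subset_closure ⟨j, by simp [hj], rfl⟩)
    have := this hk
    simp at this
    tauto

end

end SBU

/-- Two simple bases with common core and common support are equal. -/
theorem simple_base_unique
    [Finite B] (cs : CoxeterSystem M W) (s : B) (w w' : W)
    (h : IsSimpleBase cs s w) (h' : IsSimpleBase cs s w')
    (J : Set B) (hJ : IsSupport cs s w J) (hJ' : IsSupport cs s w' J) :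
    w = w' := by
  classical
  have := Fintype.ofFinite B
  obtain ⟨⟨hb1, hb2⟩, l, rfl, hlen, hn, hs⟩ := h
  obtain ⟨⟨hb1', hb2'⟩, l', rfl, hlen', hn', hs'⟩ := h'
  have hE : SBU.EE M s l := SBU.EE_of_base cs (by rw [hb1, hlen])
  have hE' : SBU.EE M s l' := SBU.EE_of_base cs (by rw [hb1', hlen'])
  have hU := SBU.UU_of_base cs hn hs hlen hE hb2
  refine SBU.main_comb cs s l l' hn hs ?_ hU hE'
  rw [List.perm_ext_iff_of_nodup hn hn']
  intro a
  rw [SBU.mem_iff_of_support cs hn hs hJ, SBU.mem_iff_of_support cs hn' hs' hJ']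
end

section
/- Let (W,S) be a Coxeter system with S finite, S irreducible and non-spherical (i.e. W is infinite). Then for every s ∈ S there exists a good marking with core s. -/
variable {B : Type*} {W : Type*} [Group W] {M : CoxeterMatrix B}

/-- A *marking* `((s, w), m)`: a base `(s, w)` together with its support `supp` and a marker
`m ∈ S ∖ supp⊥`. -/
structure Marking (cs : CoxeterSystem M W) where
  core : B
  elt : W
  marker : B
  supp : Set B
  isBase : IsBase cs core elt
  isSupport : IsSupport cs core elt supp
  marker_not_perp : marker ∉ perpIn cs Set.univ supp

variable {cs : CoxeterSystem M W}

/-- A marking is *complete* if `s · (w m w⁻¹)` has infinite order. -/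
def Marking.Complete (μ : Marking cs) : Prop :=
  ¬ IsOfFinOrder (cs.simple μ.core * (μ.elt * cs.simple μ.marker * μ.elt⁻¹))

/-- A marking is *semi-complete* if `J ∪ {m}` is irreducible, 2-spherical and
non-spherical. -/
def Marking.SemiComplete (μ : Marking cs) : Prop :=
  IrreducibleSubset cs (μ.supp ∪ {μ.marker}) ∧
    TwoSpherical cs (μ.supp ∪ {μ.marker}) ∧ ¬ Spherical cs (μ.supp ∪ {μ.marker})

/-- A marking is *simple* if its base is simple and its marker lies outside its support. -/
def Marking.Simple (μ : Marking cs) : Prop :=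
  IsSimpleBase cs μ.core μ.elt ∧ μ.marker ∉ μ.supp

/-- A *good* marking is a complete or semi-complete simple marking with spherical
support. -/
def Marking.Good (μ : Marking cs) : Prop :=
  (μ.Complete ∨ μ.SemiComplete) ∧ μ.Simple ∧ Spherical cs μ.supp

/-- Move N1: same core, same group element, adjacent markers. -/
def MoveN1 (μ μ' : Marking cs) : Prop :=
  μ.core = μ'.core ∧ μ.elt = μ'.elt ∧ Adjacent cs μ.marker μ'.marker

/-- Move M1: same core, same group element, adjacent markers, both markings complete. -/
def MoveM1 (μ μ' : Marking cs) : Prop :=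
  μ.core = μ'.core ∧ μ.elt = μ'.elt ∧ Adjacent cs μ.marker μ'.marker ∧
    μ.Complete ∧ μ'.Complete

/-- Move M2: same core, equal markers, and the group elements differ by one simple
reflection adjacent to the marker. -/
def MoveM2 (μ μ' : Marking cs) : Prop :=
  μ.core = μ'.core ∧ μ.marker = μ'.marker ∧
    ∃ j : B, (μ.elt = μ'.elt * cs.simple j ∨ μ'.elt = μ.elt * cs.simple j) ∧
      Adjacent cs μ.marker j

/-- Move M3: same core and `J ∪ {m} ∪ J' ∪ {m'}` is 2-spherical. -/
def MoveM3 (μ μ' : Marking cs) : Prop :=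
  μ.core = μ'.core ∧
    TwoSpherical cs (μ.supp ∪ {μ.marker} ∪ μ'.supp ∪ {μ'.marker})

/-- `K` is a maximal spherical subset of `J`. -/
def MaximalSphericalIn (cs : CoxeterSystem M W) (K J : Set B) : Prop :=
  K ⊆ J ∧ Spherical cs K ∧ ∀ L : Set B, K ⊆ L → L ⊆ J → Spherical cs L → L = K

/-- Move M4: same core, the first marking is complete, its marker commutes with some maximal
spherical subset of its support `J`, and `J = J' ∪ {m'}`. -/
def MoveM4 (μ μ' : Marking cs) : Prop :=
  μ.core = μ'.core ∧ μ.Complete ∧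
    (∃ K : Set B, MaximalSphericalIn cs K μ.supp ∧
      ∀ k ∈ K, Commute (cs.simple μ.marker) (cs.simple k)) ∧
    μ.supp = μ'.supp ∪ {μ'.marker}


namespace GM

open scoped Classical in
/-- parity permutation -/
noncomputable def parFun (cs : CoxeterSystem M W) (i : B) : W × ZMod 2 → W × ZMod 2 :=
  fun x => (cs.simple i * x.1 * cs.simple i, x.2 + if x.1 = cs.simple i then 1 else 0)

theorem parFun_invol (cs : CoxeterSystem M W) (i : B) : Function.Involutive (parFun cs i) := by
  rintro ⟨t, e⟩
  have h : cs.simple i * t * cs.simple i = cs.simple i ↔ t = cs.simple i := by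
    constructor
    · intro h
      have h2 := congrArg (fun z => cs.simple i * z * cs.simple i) h
      simpa [mul_assoc] using h2
    · rintro rfl; simp
  unfold parFun
  simp only [h]
  ext
  · simp [mul_assoc]
  · by_cases ht : t = cs.simple i
    · rw [if_pos (h.2 ht), if_pos ht]
      simp only [add_assoc]
      rw [show (1 : ZMod 2) + 1 = 0 from rfl]; simp
    · rw [if_neg (fun h' => ht (h.1 h')), if_neg ht]
      simp

noncomputable def parPerm (cs : CoxeterSystem M W) (i : B) : Equiv.Perm (W × ZMod 2) :=
  (parFun_invol cs i).toPerm

theorem simple_mul_pow (cs : CoxeterSystem M W) (i j : B) (n : ℕ) :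
    cs.simple j * (cs.simple i * cs.simple j) ^ n =
      ((cs.simple i * cs.simple j) ^ n)⁻¹ * cs.simple j := by
  induction n with
  | zero => simp
  | succ n ih =>
    rw [pow_succ', ← mul_assoc, ← mul_assoc, mul_assoc (cs.simple j * cs.simple i), ih,
      ← pow_succ', pow_succ, mul_inv_rev]
    simp [mul_assoc]

open scoped Classical in
theorem parPerm_pow (cs : CoxeterSystem M W) (i j : B) (n : ℕ) (t : W) (e : ZMod 2) :
    ((parPerm cs i * parPerm cs j) ^ n) (t, e) =
      ((cs.simple i * cs.simple j) ^ n * t * ((cs.simple i * cs.simple j) ^ n)⁻¹,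
        e + ∑ a ∈ Finset.range (2 * n),
          if t = ((cs.simple i * cs.simple j) ^ a)⁻¹ * cs.simple j then (1 : ZMod 2) else 0) := by
  induction n with
  | zero => simp
  | succ n ih =>
    rw [pow_succ', Equiv.Perm.mul_apply, ih, Equiv.Perm.mul_apply]
    simp only [parPerm, Function.Involutive.coe_toPerm, parFun]
    set p := cs.simple i * cs.simple j with hp
    have e1 : (p ^ n * t * (p ^ n)⁻¹ = cs.simple j) ↔ t = (p ^ (2 * n))⁻¹ * cs.simple j := by
      have h1 : (p ^ n)⁻¹ * cs.simple j * p ^ n = (p ^ (2 * n))⁻¹ * cs.simple j := by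
        rw [mul_assoc, simple_mul_pow, two_mul, pow_add, mul_inv_rev, mul_assoc]
      rw [← h1]
      constructor
      · intro h; rw [← h]; group
      · rintro rfl; group
    have e2 : (cs.simple j * (p ^ n * t * (p ^ n)⁻¹) * cs.simple j = cs.simple i) ↔
        t = (p ^ (2 * n + 1))⁻¹ * cs.simple j := by
      have h1 : (p ^ n)⁻¹ * (cs.simple j * cs.simple i * cs.simple j) * p ^ n
          = (p ^ (2 * n + 1))⁻¹ * cs.simple j := by
        have h2 : cs.simple j * cs.simple i = p⁻¹ := by simp [hp]
        rw [h2, mul_assoc, mul_assoc, simple_mul_pow, ← hp]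
        rw [← mul_assoc p⁻¹, ← mul_inv_rev, ← mul_assoc, ← mul_inv_rev, ← pow_succ, ← pow_add]
        congr 3; ring
      rw [← h1]
      constructor
      · intro h; rw [← h]
        have : ∀ x : W, cs.simple j * (cs.simple j * x * cs.simple j) * cs.simple j = x := by
          intro x; simp [mul_assoc]
        rw [this]; group
      · rintro rfl
        have : ∀ x : W, cs.simple j * (cs.simple j * x * cs.simple j) * cs.simple j = x := by
          intro x; simp [mul_assoc]
        rw [show p ^ n * ((p ^ n)⁻¹ * (cs.simple j * cs.simple i * cs.simple j) * p ^ n) *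
          (p ^ n)⁻¹ = (cs.simple j * cs.simple i * cs.simple j) by group, this]
    simp only [e1, e2]
    ext
    · simp only [pow_succ', mul_inv_rev]
      simp [hp, mul_assoc]
    · simp only [mul_add, mul_one, Finset.sum_range_succ]
      ring

theorem parPerm_liftable (cs : CoxeterSystem M W) : M.IsLiftable (parPerm cs) := by
  classical
  intro i j
  ext1 ⟨t, e⟩
  rw [parPerm_pow]
  rw [cs.simple_mul_simple_pow, two_mul, Finset.sum_range_add]
  have : ∀ x : ℕ, (cs.simple i * cs.simple j) ^ (M i j + x) = (cs.simple i * cs.simple j) ^ x := by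
    intro x; rw [pow_add, cs.simple_mul_simple_pow, one_mul]
  simp only [this]
  rw [CharTwo.add_self_eq_zero]
  simp

noncomputable def par (cs : CoxeterSystem M W) : W →* Equiv.Perm (W × ZMod 2) :=
  cs.lift ⟨parPerm cs, parPerm_liftable cs⟩

theorem par_simple (cs : CoxeterSystem M W) (i : B) : par cs (cs.simple i) = parPerm cs i :=
  cs.lift_apply_simple (parPerm_liftable cs) i

open scoped Classical in
theorem par_word (cs : CoxeterSystem M W) (ω : List B) (t : W) (e : ZMod 2) :
    par cs (cs.wordProd ω) (t, e) =
      (cs.wordProd ω * t * (cs.wordProd ω)⁻¹, e + ((cs.rightInvSeq ω).count t : ZMod 2)) := by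
  induction ω with
  | nil => simp
  | cons i ω ih =>
    rw [cs.wordProd_cons, map_mul, Equiv.Perm.mul_apply, ih, par_simple]
    simp only [parPerm, Function.Involutive.coe_toPerm, parFun, CoxeterSystem.rightInvSeq,
      List.count_cons]
    have e1 : (cs.wordProd ω * t * (cs.wordProd ω)⁻¹ = cs.simple i) ↔
        (cs.wordProd ω)⁻¹ * cs.simple i * cs.wordProd ω = t := by
      constructor
      · intro h; rw [← h]; group
      · rintro rfl; group
    simp only [e1]
    ext
    · simp [mul_assoc]
    · push_cast
      simp [add_assoc]

theorem par_shift (cs : CoxeterSystem M W) (w t : W) (e : ZMod 2) :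
    par cs w (t, e + 1) = ((par cs w (t, e)).1, (par cs w (t, e)).2 + 1) := by
  obtain ⟨ω, rfl⟩ := cs.wordProd_surjective w
  simp only [par_word]
  ext
  · rfl
  · simp only; ring

theorem par_refl (cs : CoxeterSystem M W) (t : W) (ht : cs.IsReflection t) (e : ZMod 2) :
    par cs t (t, e) = (t, e + 1) := by
  obtain ⟨u, i, rfl⟩ := ht
  set t := u * cs.simple i * u⁻¹ with ht
  obtain ⟨e', he'⟩ : ∃ e', par cs u⁻¹ (t, e) = (cs.simple i, e') := by
    obtain ⟨ω, hω⟩ := cs.wordProd_surjective u⁻¹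
    rw [← hω, par_word]
    refine ⟨_, Prod.ext ?_ rfl⟩
    simp only [hω, ht]; group
  have h2 : par cs u (cs.simple i, e') = (t, e) := by
    rw [← he', ← Equiv.Perm.mul_apply, ← map_mul]; simp
  have h1 : par cs t = par cs u * par cs (cs.simple i) * par cs u⁻¹ := by
    rw [ht, map_mul, map_mul]
  rw [h1, Equiv.Perm.mul_apply, Equiv.Perm.mul_apply, he', par_simple]
  have h3 : parPerm cs i (cs.simple i, e') = (cs.simple i, e' + 1) := by
    simp [parPerm, parFun]
  rw [h3, par_shift, h2]

/-- Strong exchange. -/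
theorem mem_ris (cs : CoxeterSystem M W) (ω : List B) (t : W)
    (h : cs.IsRightInversion (cs.wordProd ω) t) : t ∈ cs.rightInvSeq ω := by
  classical
  by_contra hn
  obtain ⟨ω', hr, hω'⟩ := cs.exists_isReduced (cs.wordProd ω * t)
  have h1 : par cs (cs.wordProd ω * t) (t, 0) = (cs.wordProd ω * t * (cs.wordProd ω)⁻¹, 1) := by
    rw [map_mul, Equiv.Perm.mul_apply, par_refl cs t h.1, par_word, List.count_eq_zero_of_not_mem hn]
    simp
  rw [hω', par_word] at h1
  have h2 : t ∈ cs.rightInvSeq ω' := by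
    by_contra hn'
    rw [List.count_eq_zero_of_not_mem hn'] at h1
    simp at h1
  have h3 := cs.isRightInversion_of_mem_rightInvSeq hr h2
  rw [← hω', h.1.isRightInversion_mul_left_iff] at h3
  exact h3 h

theorem mem_lis (cs : CoxeterSystem M W) (ω : List B) (t : W)
    (h : cs.IsLeftInversion (cs.wordProd ω) t) : t ∈ cs.leftInvSeq ω := by
  rw [← cs.isRightInversion_inv_iff, ← cs.wordProd_reverse] at h
  have := mem_ris cs _ t h
  rw [cs.rightInvSeq_reverse] at this
  simpa using this

theorem lis_mem_closure (cs : CoxeterSystem M W) (J : Set B) (ω : List B) (h : ∀ i ∈ ω, i ∈ J)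
    (t : W) (ht : t ∈ cs.leftInvSeq ω) : t ∈ Subgroup.closure (cs.simple '' J) := by
  induction ω generalizing t with
  | nil => simp at ht
  | cons i ω ih =>
    have hi : cs.simple i ∈ Subgroup.closure (cs.simple '' J) :=
      Subgroup.subset_closure ⟨i, h i (by simp), rfl⟩
    simp only [CoxeterSystem.leftInvSeq, List.mem_cons, List.mem_map] at ht
    rcases ht with rfl | ⟨u, hu, rfl⟩
    · exact hi
    · have := ih (fun k hk => h k (by simp [hk])) u hu
      simp only [MulAut.conj_apply]
      exact mul_mem (mul_mem hi this) (inv_mem hi)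

theorem wordProd_mem (cs : CoxeterSystem M W) (J : Set B) (ω : List B) (h : ∀ i ∈ ω, i ∈ J) :
    cs.wordProd ω ∈ Subgroup.closure (cs.simple '' J) := by
  induction ω with
  | nil => simp [one_mem]
  | cons i ω ih =>
    rw [cs.wordProd_cons]
    exact mul_mem (Subgroup.subset_closure ⟨i, h i (by simp), rfl⟩)
      (ih fun k hk => h k (by simp [hk]))

end GM

namespace GM

/-- Twice the Tits form matrix. -/
noncomputable def A (M : CoxeterMatrix B) (i j : B) : ℝ := -2 * Real.cos (Real.pi / (M i j : ℝ))

theorem A_symm (M : CoxeterMatrix B) (i j : B) : A M i j = A M j i := by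
  rw [A, A, M.symmetric]

theorem A_self (M : CoxeterMatrix B) (i : B) : A M i i = 2 := by
  simp [A]

theorem A_zero (M : CoxeterMatrix B) {i j : B} (h : M i j = 0) : A M i j = -2 := by
  simp [A, h]

theorem A_nonpos (M : CoxeterMatrix B) {i j : B} (h : i ≠ j) : A M i j ≤ 0 := by
  have h1 := M.off_diagonal i j h
  by_cases h0 : M i j = 0
  · rw [A_zero M h0]; norm_num
  have h2 : (2 : ℝ) ≤ M i j := by
    have : 2 ≤ M i j := by
      have : M i j ≠ 1 := h1
      omega
    exact_mod_cast this
  have : 0 ≤ Real.cos (Real.pi / (M i j : ℝ)) := by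
    apply Real.cos_nonneg_of_neg_pi_div_two_le_of_le
    · have : 0 ≤ Real.pi / (M i j : ℝ) := by positivity
      have := Real.pi_pos
      linarith
    · apply div_le_div_of_nonneg_left Real.pi_pos.le (by norm_num) h2
  unfold A; linarith

theorem commute_of_two (cs : CoxeterSystem M W) {i j : B} (h : M i j = 2) :
    Commute (cs.simple i) (cs.simple j) := by
  have h1 := cs.simple_mul_simple_pow i j
  rw [h, pow_two, mul_eq_one_iff_eq_inv] at h1
  simpa [Commute, SemiconjBy] using h1

theorem A_le (cs : CoxeterSystem M W) {i j : B}
    (h : ¬ Commute (cs.simple i) (cs.simple j)) : A M i j ≤ -1 := by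
  have hij : i ≠ j := by rintro rfl; exact h (Commute.refl _)
  have h1 : M i j ≠ 1 := M.off_diagonal i j hij
  have h2' : M i j ≠ 2 := fun h2 => h (commute_of_two cs h2)
  by_cases h0 : M i j = 0
  · rw [A_zero M h0]; norm_num
  have h2 : (3 : ℝ) ≤ M i j := by
    have : 3 ≤ M i j := by omega
    exact_mod_cast this
  have : Real.cos (Real.pi / 3) ≤ Real.cos (Real.pi / (M i j : ℝ)) := by
    apply Real.cos_le_cos_of_nonneg_of_le_pi
    · positivity
    · linarith [Real.pi_pos]
    · apply div_le_div_of_nonneg_left Real.pi_pos.le (by norm_num) h2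
  rw [Real.cos_pi_div_three] at this
  unfold A; linarith

section
variable [Fintype B] [DecidableEq B]

noncomputable def bil (M : CoxeterMatrix B) : LinearMap.BilinForm ℝ (B → ℝ) :=
  Matrix.toBilin' (Matrix.of (A M))

/-- simple root -/
def e (i : B) : B → ℝ := Pi.single i 1

theorem bil_e (M : CoxeterMatrix B) (i j : B) : bil M (e i) (e j) = A M i j := by
  simp [bil, e, Matrix.toBilin'_single]

theorem bil_symm (M : CoxeterMatrix B) (x y : B → ℝ) : bil M x y = bil M y x := by
  simp only [bil, Matrix.toBilin'_apply, Matrix.of_apply]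
  rw [Finset.sum_comm]
  refine Finset.sum_congr rfl fun i _ => Finset.sum_congr rfl fun j _ => ?_
  rw [A_symm]; ring

theorem bil_e_left (M : CoxeterMatrix B) (i : B) (x : B → ℝ) :
    bil M (e i) x = ∑ j, A M i j * x j := by
  simp [bil, Matrix.toBilin'_apply, e, Pi.single_apply]

theorem bil_self (M : CoxeterMatrix B) (i : B) : bil M (e i) (e i) = 2 := by
  rw [bil_e, A_self]

noncomputable def sig (M : CoxeterMatrix B) (i : B) : (B → ℝ) ≃ₗ[ℝ] (B → ℝ) :=
  Module.reflection (x := e i) (f := bil M (e i)) (bil_self M i)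

theorem sig_apply (M : CoxeterMatrix B) (i : B) (x : B → ℝ) :
    sig M i x = x - bil M (e i) x • e i := Module.reflection_apply _ _

theorem sig_bil (M : CoxeterMatrix B) (i : B) (x y : B → ℝ) :
    bil M (sig M i x) (sig M i y) = bil M x y := by
  simp only [sig_apply, map_sub, map_smul, LinearMap.sub_apply, LinearMap.smul_apply, smul_eq_mul,
    bil_self, bil_symm M x (e i)]
  ring

open Polynomial.Chebyshev in
theorem sig_liftable (M : CoxeterMatrix B) : M.IsLiftable (sig M) := by
  intro i j
  by_cases hij : i = j
  · subst hij
    rw [M.diagonal, pow_one]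
    ext1 x
    exact Module.involutive_reflection (bil_self M i) x
  have h1 : M i j ≠ 1 := M.off_diagonal i j hij
  by_cases h0 : M i j = 0
  · rw [h0, pow_zero]
  by_cases h2 : M i j = 2
  · have hA : bil M (e i) (e j) = 0 := by rw [bil_e, A, h2]; simp
    have hA' : bil M (e j) (e i) = 0 := by rw [bil_symm, hA]
    rw [h2, pow_two]
    apply LinearEquiv.ext
    intro x
    simp only [LinearEquiv.mul_apply, sig_apply, map_sub, map_smul, hA, hA', bil_self, smul_eq_mul]
    simp only [LinearEquiv.coe_one, id]
    module
  have h3 : 3 ≤ M i j := by omega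
  generalize hm : M i j = m at *
  apply LinearEquiv.ext
  intro x
  set θ := 2 * (Real.pi / (m : ℝ)) with hθ
  have hm0 : (m : ℝ) ≠ 0 := by positivity
  have hm3 : (3 : ℝ) ≤ m := by exact_mod_cast h3
  have hmθ : m * θ = 2 * Real.pi := by rw [hθ]; field_simp
  have ht : 2 * Real.cos θ = bil M (e i) (e j) * bil M (e j) (e i) - 2 := by
    rw [bil_e, bil_e, A_symm M j i, A, hm, hθ, Real.cos_two_mul]; ring
  have hpos : 0 < θ := by rw [hθ]; have := Real.pi_pos; positivity
  have hlt : θ < Real.pi := by nlinarith [Real.pi_pos]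
  have hs : Real.sin θ ≠ 0 := (Real.sin_pos_of_pos_of_lt_pi hpos hlt).ne'
  have key := Module.reflection_mul_reflection_pow_apply (bil_self M i) (bil_self M j) m x _ ht
  unfold sig
  rw [key]
  have hSS : ∀ k : ℤ, (S ℝ k).eval (2 * Real.cos θ) = Real.sin ((k + 1) * θ) / Real.sin θ := by
    intro k
    rw [eq_div_iff hs, S_two_mul_real_cos]
  have z1 : (S ℝ (((m : ℤ) - 2) / 2)).eval (2 * Real.cos θ) *
     ((S ℝ (((m : ℤ) - 1) / 2)).eval (2 * Real.cos θ) +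
      (S ℝ (((m : ℤ) - 3) / 2)).eval (2 * Real.cos θ)) = 0 ∧
    (S ℝ (((m : ℤ) - 1) / 2)).eval (2 * Real.cos θ) *
     ((S ℝ ((m : ℤ) / 2)).eval (2 * Real.cos θ) +
      (S ℝ (((m : ℤ) - 2) / 2)).eval (2 * Real.cos θ)) = 0 := by
    rcases Nat.even_or_odd' m with ⟨k, hk | hk⟩
    · have a1 : ((m : ℤ) - 2) / 2 = k - 1 := by omega
      have a2 : ((m : ℤ) - 1) / 2 = k - 1 := by omega
      have a3 : (S ℝ ((k : ℤ) - 1)).eval (2 * Real.cos θ) = 0 := by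
        rw [hSS]
        have : (((k : ℤ) - 1 : ℤ) + 1 : ℝ) * θ = Real.pi := by
          have : (m : ℝ) = 2 * k := by exact_mod_cast hk
          rw [this] at hmθ
          push_cast; linarith
        rw [this]; simp
      rw [a1, a2, a3]; simp
    · have a1 : ((m : ℤ) - 2) / 2 = k - 1 := by omega
      have a2 : ((m : ℤ) - 1) / 2 = k := by omega
      have a4 : ((m : ℤ) - 3) / 2 = k - 1 := by omega
      have a5 : (m : ℤ) / 2 = k := by omega
      have a3 : (S ℝ (k : ℤ)).eval (2 * Real.cos θ) +
          (S ℝ ((k : ℤ) - 1)).eval (2 * Real.cos θ) = 0 := by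
        rw [hSS, hSS]
        have : (((k : ℤ) - 1 : ℤ) + 1 : ℝ) * θ = 2 * Real.pi - ((k : ℤ) + 1 : ℝ) * θ := by
          have : (m : ℝ) = 2 * k + 1 := by exact_mod_cast hk
          rw [this] at hmθ
          push_cast; linarith
        rw [this, Real.sin_two_pi_sub]; ring
      rw [a1, a2, a4, a5, a3]; simp
  rw [z1.1, z1.2]
  simp

noncomputable def rho (cs : CoxeterSystem M W) : W →* ((B → ℝ) ≃ₗ[ℝ] (B → ℝ)) :=
  cs.lift ⟨sig M, sig_liftable M⟩

theorem rho_simple (cs : CoxeterSystem M W) (i : B) : rho cs (cs.simple i) = sig M i :=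
  cs.lift_apply_simple (sig_liftable M) i

theorem rho_bil (cs : CoxeterSystem M W) (w : W) (x y : B → ℝ) :
    bil M (rho cs w x) (rho cs w y) = bil M x y := by
  induction w using cs.simple_induction_left with
  | one => simp
  | mul_simple_left w i ih =>
    rw [map_mul, rho_simple, LinearEquiv.mul_apply, LinearEquiv.mul_apply, sig_bil, ih]

/-- Elements of `W_J` do not change coordinates outside `J`. -/
theorem rho_coord (cs : CoxeterSystem M W) (J : Set B) (w : W)
    (hw : w ∈ Subgroup.closure (cs.simple '' J)) (k : B) (hk : k ∉ J) (x : B → ℝ) :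
    rho cs w x k = x k := by
  induction hw using Subgroup.closure_induction generalizing x with
  | mem w h =>
    obtain ⟨i, hi, rfl⟩ := h
    have : k ≠ i := by rintro rfl; exact hk hi
    rw [rho_simple, sig_apply]
    simp [e, this]
  | one => simp
  | mul u v _ _ hu hv => rw [map_mul, LinearEquiv.mul_apply, hu, hv]
  | inv u _ hu =>
    rw [← hu (rho cs u⁻¹ x), ← LinearEquiv.mul_apply, ← map_mul]
    simp

theorem simple_mem_closure (cs : CoxeterSystem M W) (J : Set B) (k : B)
    (h : cs.simple k ∈ Subgroup.closure (cs.simple '' J)) : k ∈ J := by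
  by_contra hk
  have := rho_coord cs J _ h k hk (e k)
  rw [rho_simple, sig_apply, bil_self] at this
  simp [e] at this

/-- reflection formula -/
theorem rho_conj (cs : CoxeterSystem M W) (w : W) (s : B) (x : B → ℝ) :
    rho cs (w⁻¹ * cs.simple s * w) x =
      x - bil M (rho cs w⁻¹ (e s)) x • rho cs w⁻¹ (e s) := by
  have h1 : ∀ y, rho cs w⁻¹ (rho cs w y) = y := fun y => by
    rw [← LinearEquiv.mul_apply, ← map_mul]; simp
  rw [map_mul, map_mul, LinearEquiv.mul_apply, LinearEquiv.mul_apply, rho_simple, sig_apply,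
    map_sub, map_smul, h1]
  congr 2
  rw [← rho_bil cs w⁻¹ (e s), h1]

end
end GM

namespace GM

/-- Words (read backwards) growing a connected set of generators from `s`. -/
inductive Ch (cs : CoxeterSystem M W) (s : B) : List B → Prop
  | nil : Ch cs s []
  | cons (j : B) (l : List B) : Ch cs s l → j ∉ s :: l →
      (∃ i ∈ s :: l, ¬ Commute (cs.simple i) (cs.simple j)) → Ch cs s (j :: l)

theorem Ch.nodup {cs : CoxeterSystem M W} {s : B} {l : List B} (h : Ch cs s l) :
    (s :: l).Nodup := by
  induction h with
  | nil => simp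
  | cons j l _ hj _ ih =>
    simp only [List.nodup_cons, List.mem_cons, not_or] at *
    exact ⟨⟨fun h => hj.1 h.symm, ih.1⟩, hj.2, ih.2⟩

theorem Ch.irred {cs : CoxeterSystem M W} {s : B} {l : List B} (h : Ch cs s l) :
    IrreducibleSubset cs {k | k ∈ s :: l} := by
  induction h with
  | nil =>
    rintro ⟨K, L, ⟨k, hk⟩, ⟨m, hm⟩, hd, hu, _⟩
    have h1 : k ∈ K ∪ L := Or.inl hk
    have h2 : m ∈ K ∪ L := Or.inr hm
    rw [hu] at h1 h2
    simp only [List.mem_singleton, Set.mem_setOf_eq] at h1 h2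
    subst h1; subst h2
    exact Set.disjoint_left.1 hd hk hm
  | cons j l _ hj hi ih =>
    obtain ⟨i, hi, hc⟩ := hi
    have key : ∀ K L : Set B, K.Nonempty → L.Nonempty → Disjoint K L →
        K ∪ L = {k | k ∈ s :: j :: l} →
        (∀ k ∈ K, ∀ l ∈ L, Commute (cs.simple k) (cs.simple l)) → j ∈ K → False := by
      intro K L hK hL hd hu hcom hjK
      have mem : ∀ k, k ∈ K ∪ L ↔ (k = j ∨ k ∈ s :: l) := by
        intro k; rw [hu]; simp only [Set.mem_setOf_eq, List.mem_cons]; tauto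
      have hiK : i ∈ K := by
        rcases (mem i).2 (Or.inr hi) with h | h
        · exact h
        · exact absurd (hcom j hjK i h).symm hc
      have hij : i ≠ j := by rintro rfl; exact hj hi
      have hjL : j ∉ L := fun h => Set.disjoint_left.1 hd hjK h
      refine ih ⟨K \ {j}, L, ⟨i, hiK, hij⟩, hL, hd.mono_left Set.diff_subset, ?_,
        fun k hk l hl => hcom k hk.1 l hl⟩
      ext k
      have := mem k
      simp only [Set.mem_union, Set.mem_diff, Set.mem_singleton_iff, Set.mem_setOf_eq] at *
      constructor
      · rintro (⟨h1, h2⟩ | h)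
        · exact (this.1 (Or.inl h1)).resolve_left h2
        · refine (this.1 (Or.inr h)).resolve_left ?_
          rintro rfl; exact hjL h
      · intro h
        have hkj : k ≠ j := by rintro rfl; exact hj h
        rcases this.2 (Or.inr h) with h1 | h1
        · exact Or.inl ⟨h1, hkj⟩
        · exact Or.inr h1
    rintro ⟨K, L, hK, hL, hd, hu, hcom⟩
    have hjm : j ∈ K ∪ L := by rw [hu]; simp
    rcases hjm with h | h
    · exact key K L hK hL hd hu hcom h
    · exact key L K hL hK hd.symm (by rw [Set.union_comm, hu])
        (fun k hk l hl => (hcom l hl k hk).symm) h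

theorem closure_pair_finite (cs : CoxeterSystem M W) (i j : B) (h : M i j ≠ 0) :
    Adjacent cs i j := by
  set p := cs.simple i * cs.simple j with hp
  have hpM : p ^ M i j = 1 := cs.simple_mul_simple_pow i j
  have hfo : IsOfFinOrder p := isOfFinOrder_iff_pow_eq_one.2 ⟨_, Nat.pos_of_ne_zero h, hpM⟩
  have hfin : (Set.range fun k : ℤ => p ^ k).Finite := by
    have := hfo.finite_zpowers
    exact this.subset (by rintro _ ⟨k, rfl⟩; exact ⟨k, rfl⟩)
  have hjp : ∀ k : ℤ, p ^ k * cs.simple i = cs.simple i * p ^ (-k) := by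
    intro k
    have h1 : cs.simple i * p * (cs.simple i)⁻¹ = p⁻¹ := by simp [hp, mul_assoc]
    have h2 : cs.simple i * p ^ (-k) * (cs.simple i)⁻¹ = p ^ k := by
      rw [← conj_zpow, h1]; simp
    rw [← h2]; simp
  let S : Set W := (Set.range fun k : ℤ => p ^ k) ∪
    (fun x => x * cs.simple i) '' (Set.range fun k : ℤ => p ^ k)
  have hS : S.Finite := hfin.union (hfin.image _)
  refine hS.subset ?_
  have hi : ∀ x ∈ S, x * cs.simple i ∈ S := by
    rintro x (⟨k, rfl⟩ | ⟨_, ⟨k, rfl⟩, rfl⟩)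
    · exact Or.inr ⟨_, ⟨k, rfl⟩, rfl⟩
    · left; exact ⟨k, by simp [mul_assoc]⟩
  have hj' : ∀ x ∈ S, x * cs.simple j ∈ S := by
    have hj : cs.simple j = cs.simple i * p := by simp [hp]
    rintro x (⟨k, rfl⟩ | ⟨_, ⟨k, rfl⟩, rfl⟩)
    · right
      refine ⟨_, ⟨k - 1, rfl⟩, ?_⟩
      simp only
      rw [hj, ← mul_assoc, hjp, hjp, mul_assoc, ← zpow_add_one]
      congr 2; ring
    · left; refine ⟨k + 1, ?_⟩
      simp only
      rw [zpow_add_one, hp, mul_assoc]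
  intro x hx
  change x ∈ Subgroup.closure _ at hx
  induction hx using Subgroup.closure_induction_right with
  | one => exact Or.inl ⟨0, by simp⟩
  | mul_right x y _ hy ih =>
    rcases hy with rfl | rfl
    · exact hi x ih
    · exact hj' x ih
  | mul_inv_cancel x y _ hy ih =>
    rcases hy with rfl | rfl
    · rw [cs.inv_simple]; exact hi x ih
    · rw [cs.inv_simple]; exact hj' x ih

section
variable [Fintype B] [DecidableEq B]

theorem pair_le (M : CoxeterMatrix B) (x : B → ℝ) (hx : ∀ k, 0 ≤ x k) (j i : B) (hj : x j = 0)
    (hi : 1 ≤ x i) : bil M (e j) x ≤ A M j i := by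
  have hij : j ≠ i := by rintro rfl; linarith
  rw [bil_e_left, ← Finset.add_sum_erase _ _ (Finset.mem_univ i)]
  have h1 : ∑ k ∈ Finset.univ.erase i, A M j k * x k ≤ 0 := by
    apply Finset.sum_nonpos
    intro k _
    by_cases hk : j = k
    · subst hk; rw [hj]; simp
    · exact mul_nonpos_of_nonpos_of_nonneg (A_nonpos M hk) (hx k)
  have h2 := A_nonpos M hij
  nlinarith

theorem Ch.root {cs : CoxeterSystem M W} {s : B} {l : List B} (h : Ch cs s l) :
    (∀ k ∈ s :: l, 1 ≤ rho cs (cs.wordProd l) (e s) k) ∧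
      ∀ k ∉ s :: l, rho cs (cs.wordProd l) (e s) k = 0 := by
  induction h with
  | nil =>
    simp only [List.mem_singleton, CoxeterSystem.wordProd_nil, map_one, LinearEquiv.coe_one, id]
    constructor
    · rintro k rfl; simp [e]
    · intro k hk; simp [e, hk]
  | cons j l _ hj hi ih =>
    obtain ⟨i, hi, hc⟩ := hi
    set x := rho cs (cs.wordProd l) (e s) with hx
    have hpos : ∀ k, 0 ≤ x k := by
      intro k
      by_cases hk : k ∈ s :: l
      · linarith [ih.1 k hk]
      · rw [ih.2 k hk]
    have hb : bil M (e j) x ≤ -1 := (pair_le M x hpos j i (ih.2 j hj) (ih.1 i hi)).trans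
      (A_le cs fun h => hc h.symm)
    have hy : rho cs (cs.wordProd (j :: l)) (e s) = x - bil M (e j) x • e j := by
      rw [cs.wordProd_cons, map_mul, LinearEquiv.mul_apply, rho_simple, sig_apply]
    rw [hy]
    constructor
    · intro k hk
      by_cases hkj : k = j
      · subst hkj
        simp only [e] at hb ⊢
        simp [ih.2 k hj]; linarith
      · have : k ∈ s :: l := by
          simp only [List.mem_cons] at hk ⊢; tauto
        simpa [e, hkj] using ih.1 k this
    · intro k hk
      have h1 : k ≠ j := by rintro rfl; simp at hk
      have h2 : k ∉ s :: l := by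
        simp only [List.mem_cons] at hk ⊢; tauto
      simpa [e, h1] using ih.2 k h2

theorem Ch.root_nonneg {cs : CoxeterSystem M W} {s : B} {l : List B} (h : Ch cs s l) (k : B) :
    0 ≤ rho cs (cs.wordProd l) (e s) k := by
  by_cases hk : k ∈ s :: l
  · linarith [h.root.1 k hk]
  · rw [h.root.2 k hk]

theorem Ch.length {cs : CoxeterSystem M W} {s : B} {l : List B} (h : Ch cs s l) :
    cs.length (cs.wordProd l * cs.simple s * (cs.wordProd l)⁻¹) = 2 * l.length + 1 := by
  induction h with
  | nil => simp
  | cons j l hl hj hi ih =>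
    obtain ⟨i, hi, hc⟩ := hi
    set u := cs.wordProd l with hu
    set r := u * cs.simple s * u⁻¹ with hr
    set x := rho cs u (e s) with hx
    set ω : List B := l ++ [s] ++ l.reverse with hω
    have hωr : cs.wordProd ω = r := by
      simp [hω, cs.wordProd_append, cs.wordProd_cons, hr, hu, mul_assoc]
    have hmem : ∀ k ∈ ω, k ∈ {k | k ∈ s :: l} := by
      intro k hk
      simp only [hω, List.mem_append, List.mem_reverse, List.mem_singleton] at hk
      simp only [Set.mem_setOf_eq, List.mem_cons]; tauto
    have hnm : cs.simple j ∉ cs.leftInvSeq ω := by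
      intro h
      exact hj (simple_mem_closure cs _ j (lis_mem_closure cs _ ω hmem _ h))
    have hrr : r⁻¹ = r := by simp [hr, mul_assoc]
    have hb : bil M (e j) x ≤ -1 :=
      (pair_le M x hl.root_nonneg j i (hl.root.2 j hj) (hl.root.1 i hi)).trans
      (A_le cs fun h => hc h.symm)
    -- j r longer
    have l1 : cs.length (cs.simple j * r) = cs.length r + 1 := by
      rcases cs.length_simple_mul r j with h | h
      · exact h
      · exfalso
        apply hnm
        apply mem_lis
        rw [hωr]
        exact ⟨cs.isReflection_simple j, by omega⟩
    have l2 : cs.length (r * cs.simple j) = cs.length r + 1 := by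
      rw [← l1, ← cs.length_inv, mul_inv_rev, hrr, cs.inv_simple]
    have hrho : ∀ y, rho cs r y = y - bil M x y • x := by
      intro y
      have := rho_conj cs u⁻¹ s y
      rw [inv_inv] at this
      exact this
    have l3 : cs.length (cs.simple j * (r * cs.simple j)) = cs.length (r * cs.simple j) + 1 := by
      rcases cs.length_simple_mul (r * cs.simple j) j with h | h
      · exact h
      · exfalso
        have hm : cs.simple j ∈ cs.leftInvSeq (ω.concat j) := by
          apply mem_lis
          rw [cs.wordProd_concat, hωr]
          exact ⟨cs.isReflection_simple j, by omega⟩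
        rw [cs.leftInvSeq_concat, List.concat_eq_append, List.mem_append,
          List.mem_singleton, hωr] at hm
        rcases hm with hm | hm
        · exact hnm hm
        · have hcomm : cs.simple j * r = r * cs.simple j := by
            conv_lhs => rw [hm]
            simp
          have h1 := congrArg (fun g => rho cs g (e j) j) hcomm
          have hxj : x j = 0 := hl.root.2 j hj
          simp only [map_mul, LinearEquiv.mul_apply, rho_simple, hrho, sig_apply, map_sub,
            map_smul, bil_self, bil_symm M x (e j)] at h1
          have hej : e j j = (1 : ℝ) := by simp [e]
          simp only [Pi.sub_apply, Pi.smul_apply, smul_eq_mul, hxj, hej] at h1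
          nlinarith
    rw [cs.wordProd_cons, ← hu]
    rw [show cs.simple j * u * cs.simple s * (cs.simple j * u)⁻¹ =
      cs.simple j * (r * cs.simple j) by simp [hr, mul_assoc], l3, l2, ih]
    simp; ring

theorem infinite_order (cs : CoxeterSystem M W) {s : B} {l : List B} (h : Ch cs s l) (m i : B)
    (hm : m ∉ s :: l) (hi : i ∈ s :: l) (h0 : M m i = 0) :
    ¬ IsOfFinOrder ((cs.wordProd l * cs.simple s * (cs.wordProd l)⁻¹) * cs.simple m) := by
  set u := cs.wordProd l with hu
  set r := u * cs.simple s * u⁻¹ with hr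
  set x := rho cs u (e s) with hx
  have hrho : ∀ y, rho cs r y = y - bil M x y • x := by
    intro y
    have := rho_conj cs u⁻¹ s y
    rw [inv_inv] at this
    exact this
  have hb : bil M (e m) x ≤ -2 := by
    have := pair_le M x h.root_nonneg m i (h.root.2 m hm) (h.root.1 i hi)
    rwa [A_zero M h0] at this
  have hxx : bil M x x = 2 := by rw [hx, rho_bil, bil_self]
  have hxm : x m = 0 := h.root.2 m hm
  have hem : e m m = (1 : ℝ) := by simp [e]
  obtain ⟨c, hc⟩ : ∃ c, bil M (e m) x = -c := ⟨- bil M (e m) x, by ring⟩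
  have hc2 : 2 ≤ c := by linarith
  have key : ∀ n : ℕ, ∃ a b : ℝ, (n : ℝ) ≤ b ∧ b + 1 ≤ a ∧
      rho cs ((r * cs.simple m) ^ n) x = a • x + b • e m := by
    intro n
    induction n with
    | zero => exact ⟨1, 0, by simp, by norm_num, by simp⟩
    | succ n ih =>
      obtain ⟨a, b, h1, h2, h3⟩ := ih
      have hn : (0 : ℝ) ≤ n := by positivity
      have h5 : a + 1 ≤ c * a - b := by nlinarith
      refine ⟨c * (c * a - b) - a, c * a - b, ?_, ?_, ?_⟩
      · push_cast; linarith
      · nlinarith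
      · rw [pow_succ', map_mul, LinearEquiv.mul_apply, h3, map_mul, LinearEquiv.mul_apply,
          rho_simple, sig_apply, hrho]
        simp only [map_add, map_sub, map_smul, bil_symm M x (e m), hc, hxx, bil_self, smul_eq_mul]
        module
  rw [isOfFinOrder_iff_pow_eq_one]
  rintro ⟨n, hn, hp⟩
  obtain ⟨a, b, h1, h2, h3⟩ := key n
  rw [hp, map_one] at h3
  have h4 := congrFun h3 m
  simp only [LinearEquiv.coe_one, id, Pi.add_apply, Pi.smul_apply, smul_eq_mul, hxm, hem] at h4
  have : (1 : ℝ) ≤ n := by exact_mod_cast hn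
  linarith
end
end GM

/-- If `S` is irreducible and non-spherical, then every `s ∈ S` is the core
of some good marking. -/
theorem exists_good_marking
    [Finite B] (cs' : CoxeterSystem M W)
    (hirr : IrreducibleSubset cs' (Set.univ : Set B))
    (hns : ¬ Spherical cs' (Set.univ : Set B)) (s : B) :
    ∃ μ : Marking cs', μ.core = s ∧ μ.Good := by
  classical
  haveI : Fintype B := Fintype.ofFinite B
  by_contra H
  have key : ∀ n : ℕ, ∃ l : List B, l.length = n ∧ GM.Ch cs' s l ∧
      Spherical cs' {k | k ∈ s :: l} := by
    intro n
    induction n with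
    | zero =>
      refine ⟨[], rfl, GM.Ch.nil, ?_⟩
      have h := GM.closure_pair_finite cs' s s (by rw [M.diagonal]; norm_num)
      unfold Adjacent at h
      unfold Spherical
      have e : cs'.simple '' {k | k ∈ [s]} = {cs'.simple s, cs'.simple s} := by
        ext x; simp [eq_comm]
      rw [e]; exact h
    | succ n ih =>
      obtain ⟨l, hlen, hl, hsph⟩ := ih
      set J : Set B := {k | k ∈ s :: l} with hJ
      have hsJ : s ∈ J := by simp [hJ]
      -- find a marker
      obtain ⟨m, hmJ, i, hiJ, hmi⟩ : ∃ m, m ∉ J ∧ ∃ i ∈ J,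
          ¬ Commute (cs'.simple i) (cs'.simple m) := by
        by_contra hno
        push Not at hno
        by_cases hJu : J = Set.univ
        · exact hns (hJu ▸ hsph)
        · apply hirr
          refine ⟨J, Jᶜ, ⟨s, hsJ⟩, Set.nonempty_compl.2 hJu, disjoint_compl_right,
            Set.union_compl_self J, fun k hk m hm => hno m hm k hk⟩
      have hch : GM.Ch cs' s (m :: l) := GM.Ch.cons m l hl hmJ ⟨i, hiJ, hmi⟩
      refine ⟨m :: l, by simp [hlen], hch, ?_⟩
      have hunion : {k | k ∈ s :: m :: l} = J ∪ {m} := by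
        ext k; simp only [hJ, Set.mem_setOf_eq, List.mem_cons, Set.mem_union,
          Set.mem_singleton_iff]; tauto
      rw [hunion]
      by_contra hnsph
      apply H
      set u := cs'.wordProd l with hu
      set w := u⁻¹ with hw
      have hw' : w = cs'.wordProd l.reverse := by simp [hw, hu]
      have hwJ : w ∈ Subgroup.closure (cs'.simple '' J) := by
        rw [hw']
        exact GM.wordProd_mem cs' J _ fun k hk => by
          simp only [hJ, Set.mem_setOf_eq, List.mem_cons]; right; simpa using hk
      have hlenr : cs'.length (w⁻¹ * cs'.simple s * w) = 2 * l.length + 1 := by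
        rw [hw, inv_inv]; exact hl.length
      have hlenw : cs'.length w = l.length := by
        apply le_antisymm
        · rw [hw']; simpa using cs'.length_wordProd_le l.reverse
        · have h1 := cs'.length_mul_le (w⁻¹ * cs'.simple s) w
          have h2 := cs'.length_mul_le w⁻¹ (cs'.simple s)
          rw [cs'.length_inv, cs'.length_simple] at h2
          omega
      have hbase : IsBase cs' s w := by
        refine ⟨by rw [hlenr, hlenw], fun t ht htl => ?_⟩
        refine Set.Finite.subset hsph ?_
        apply (Subgroup.closure_le _).2
        have htJ : t ∈ Subgroup.closure (cs'.simple '' J) := by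
          apply GM.lis_mem_closure cs' J l.reverse
          · intro k hk
            simp only [hJ, Set.mem_setOf_eq, List.mem_cons]; right; simpa using hk
          · apply GM.mem_lis
            rw [← hw']
            exact ⟨ht, htl⟩
        rintro x (rfl | rfl)
        · exact Subgroup.subset_closure ⟨s, hsJ, rfl⟩
        · exact htJ
      have hsupp : IsSupport cs' s w J := by
        refine ⟨hsJ, hwJ, fun J' hs' hw'' k hk => ?_⟩
        by_contra hk'
        have hu' : u ∈ Subgroup.closure (cs'.simple '' J') := by
          rw [← inv_inv u]; exact inv_mem hw''
        have h1 := GM.rho_coord cs' J' u hu' k hk' (GM.e s)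
        have h2 : GM.e s k = 0 := by
          have : k ≠ s := by rintro rfl; exact hk' hs'
          simp [GM.e, this]
        have h3 := hl.root.1 k hk
        rw [h1, h2] at h3
        linarith
      refine ⟨⟨s, w, m, J, hbase, hsupp, fun hp => hmi (hp.2 i hiJ).symm⟩, rfl, ?_,
        ⟨⟨hbase, l.reverse, hw', ?_, ?_, ?_⟩, hmJ⟩, hsph⟩
      · by_cases h2 : TwoSpherical cs' (J ∪ {m})
        · right
          refine ⟨?_, h2, hnsph⟩
          have := hch.irred
          rwa [hunion] at this
        · left
          -- find a pair with label infinity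
          obtain ⟨j, hjJ, hj0⟩ : ∃ j ∈ J, M m j = 0 := by
            by_contra hno
            push Not at hno
            apply h2
            rintro a (ha | ha) b (hb | hb)
            · refine Set.Finite.subset hsph ?_
              apply (Subgroup.closure_le _).2
              rintro x (rfl | rfl)
              · exact Subgroup.subset_closure ⟨a, ha, rfl⟩
              · exact Subgroup.subset_closure ⟨b, hb, rfl⟩
            · rw [Set.mem_singleton_iff] at hb
              subst hb
              exact GM.closure_pair_finite cs' a b (by rw [M.symmetric]; exact hno a ha)
            · rw [Set.mem_singleton_iff] at ha
              subst ha
              exact GM.closure_pair_finite cs' a b (hno b hb)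
            · rw [Set.mem_singleton_iff] at ha hb
              subst ha; subst hb
              exact GM.closure_pair_finite cs' _ _ (by rw [M.diagonal]; norm_num)
          have hinf := GM.infinite_order cs' hl m j hmJ hjJ hj0
          intro hfin
          apply hinf
          have h3 := (MulAut.conj u).toMonoidHom.isOfFinOrder hfin
          convert h3 using 1
          simp [hw, ← hu, mul_assoc]
      · simpa using hlenw
      · have := hl.nodup
        simp only [List.nodup_cons] at this
        simpa using this.2
      · have := hl.nodup
        simp only [List.nodup_cons] at this
        simpa using this.1
  obtain ⟨l, hlen, hl, _⟩ := key (Fintype.card B)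
  have := hl.nodup.length_le_card
  simp [hlen] at this
end
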